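/- arXiv:2208.00666 — 7 statements merged into one kernel-verified Lean document; each statement's English description precedes it below -/
import Mathlib

section
/- Let d, ℓ, k, j, t, r be integers with 1 ≤ k ≤ ℓ ≤ d−1, t ≥ 0, 0 ≤ r ≤ 2^t − 1, j = 2^t + r, and d ≥ 2^{t+k−1} + r. Then the image of the polynomial e_{k,j} in the ring R_{d,ℓ,k} does not belong to the ideal 𝓘_{d,ℓ,k} := ⟨β₁, …, β_k⟩ of R_{d,ℓ,k} generated by β₁, …, β_k. -/
/-!
Write `β(T) = T^ℓ + w₁ T^(ℓ-1) + ⋯ + w_ℓ` and let `v = 1 + w̄₁ + ⋯ + w̄_{d-ℓ}` be the inverse of the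
total class `w`. Modulo `β(x₁), …, β(x_k)` the ring `R_{d,ℓ,k}` is the cohomology of the `k`-fold
fibre product of a projective bundle, and fibre integration is the functional sending
`∏ xᵢ^(aᵢ)` to `∏ w̄_{aᵢ+1-ℓ}`. It vanishes on the ideal generated by the `β(xᵢ)`, because the
relation `w ⬝ v = 1` says precisely that the classes `w̄` satisfy the linear recurrence with
characteristic polynomial `β` (`pushforward_eq_zero`).

Suppose that the homogeneous polynomial `e` contains a monomial `x^a` with all `aᵢ ≤ d - 1`. Then
`∏ xᵢ^(d-1-aᵢ) ⬝ e` integrates to `w̄_{d-ℓ}^k`, since every other monomial of `e` has an exponent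
exceeding that of `x^a` and contributes some `w̄_s` with `s > d - ℓ` (`pushforward_complement`).
So two facts remain.

* There is a ring with classes `w ⬝ v = 1` in which `w̄_{d-ℓ}^k ≠ 0`; here `k ≤ ℓ` is used
  (`exists_dual_classes`). Put `m = d - ℓ` and divide `T^d` by `∏ (T + yᵢ)` over
  `𝔽₂[y₁, …, y_m]`. By interpolation the coefficients of the remainder, multiplied by the
  Vandermonde determinant `V`, lie in `(yᵢ^d)`; thus they vanish modulo the colon ideal
  `(yᵢ^d) : V`, and `T^d` factors there. On the other hand `(∏ yᵢ)^k ⬝ V` contains the monomial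
  `∏ yᵢ^(k+i-1)`, all of whose exponents are less than `d`.

* `e_{k,j}` contains a monomial with all exponents at most `d - 1`; equivalently, the power `j` of
  the Dickson invariant `D_k = ∏_{α ≠ 0} ℓ_α` contains one with all exponents at most `d`
  (`ePoly_exists_coeff`). As a polynomial in one of the variables `z`, `D_k = D_{k-1} ⬝ L(z)`,
  where `L` is additive and monic of degree `2^(k-1)` with linear coefficient `D_{k-1}`. Hence the
  coefficient of `z^(2^(t+k-1)+r)` in `D_k^(2^t+r)` is `D_{k-1}^(2^t+2r)`
  (`dickson_pow_coeff`). One concludes by induction on `k`, because `2^t + 2r` is again of the form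
  `2^t₁ + r₁` with `r₁ < 2^t₁` and `t₁ ∈ {t, t+1}`.
-/

noncomputable section

open MvPolynomial Finset

abbrev F2 : Type := ZMod 2

/-- Variable index type: `k` variables `x`, `l` variables `w`, `m` variables `w̄`. -/
abbrev RVar (k l m : ℕ) : Type := Fin k ⊕ Fin l ⊕ Fin m

/-- The variable `xᵢ`. -/
def xP (k l m : ℕ) (i : Fin k) : MvPolynomial (RVar k l m) F2 := X (Sum.inl i)

/-- The class `w_s`, with the convention `w₀ = 1` and `w_s = 0` for `s > l`. -/
def wP (k l m : ℕ) (s : ℕ) : MvPolynomial (RVar k l m) F2 :=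
  if s = 0 then 1 else if h : s - 1 < l then X (Sum.inr (Sum.inl ⟨s - 1, h⟩)) else 0

/-- The class `w̄_s`, with the convention `w̄₀ = 1` and `w̄_s = 0` for `s > m`. -/
def wBarP (k l m : ℕ) (s : ℕ) : MvPolynomial (RVar k l m) F2 :=
  if s = 0 then 1 else if h : s - 1 < m then X (Sum.inr (Sum.inr ⟨s - 1, h⟩)) else 0

/-- The relation `ρ_n = ∑_{s=0}^{n} w_s ⬝ w̄_{n-s}`; by the conventions above this equals
the bounded sum `∑_{s=max{0,n+ℓ-d}}^{min{n,ℓ}} w_s ⬝ w̄_{n-s}`. -/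
def rhoP (k l m : ℕ) (n : ℕ) : MvPolynomial (RVar k l m) F2 :=
  ∑ s ∈ Finset.range (n + 1), wP k l m s * wBarP k l m (n - s)

/-- The ideal `I_{d,ℓ}` generated by `ρ_1, …, ρ_d`. -/
def Irel (d l k : ℕ) : Ideal (MvPolynomial (RVar k l (d - l)) F2) :=
  Ideal.span ((fun n => rhoP k l (d - l) n) '' (Set.Icc 1 d))

/-- The ring `R_{d,ℓ,k}`. -/
abbrev Rdlk (d l k : ℕ) : Type := MvPolynomial (RVar k l (d - l)) F2 ⧸ Irel d l k

/-- The quotient map onto `R_{d,ℓ,k}`. -/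
def toR (d l k : ℕ) : MvPolynomial (RVar k l (d - l)) F2 →+* Rdlk d l k :=
  Ideal.Quotient.mk _

/-- `β_i = ∑_{s=0}^{ℓ} x_i^s ⬝ w_{ℓ-s}` in `R_{d,ℓ,k}`. -/
def betaP (d l k : ℕ) (i : Fin k) : Rdlk d l k :=
  toR d l k (∑ s ∈ Finset.range (l + 1), xP k l (d - l) i ^ s * wP k l (d - l) (l - s))

/-- The ideal `⟨β₁, …, β_k⟩` of `R_{d,ℓ,k}`. -/
def betaIdeal (d l k : ℕ) : Ideal (Rdlk d l k) :=
  Ideal.span (Set.range (betaP d l k))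

/-- The linear form `ℓ_α = α₁x₁ + ⋯ + α_k x_k` over `𝔽₂`. -/
def linF (k : ℕ) (α : Fin k → ZMod 2) : MvPolynomial (Fin k) F2 :=
  ∑ i, C (α i) * X i

/-- The polynomial `e_{k,j} = (∏_i x_i^{j-1}) ⬝ ∏_α ℓ_α^j`, the product over all
`α ∈ 𝔽₂^k` that are neither zero nor a standard basis vector. -/
def ePoly (k j : ℕ) : MvPolynomial (Fin k) F2 :=
  (∏ i, X i ^ (j - 1)) *
    ∏ α ∈ Finset.univ.filter
        (fun α : Fin k → ZMod 2 => α ≠ 0 ∧ ¬ ∃ i, α = Pi.single i 1),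
      linF k α ^ j

/-! ### Monomials in powers of the Dickson invariant -/

/-- The product of all nonzero linear forms `ℓ_α`, i.e. the top Dickson invariant of `𝔽₂[x₁,…,x_n]`. -/
def dickson (n : ℕ) : MvPolynomial (Fin n) F2 :=
  ∏ α : Fin n → ZMod 2, if α = 0 then 1 else linF n α

/-- The polynomial `∏_β (T + β₁x₁ + ⋯ + β_n x_n)` whose roots are the `𝔽₂`-combinations of the
family `x`. -/
def spanPoly {A : Type} [CommRing A] [Algebra (ZMod 2) A] (n : ℕ) (x : Fin n → A) :
    Polynomial A :=
  ∏ β : Fin n → ZMod 2, (Polynomial.X + Polynomial.C (∑ i, β i • x i))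

lemma prod_fin_cons {M : Type} [CommMonoid M] (n : ℕ) (f : (Fin (n + 1) → ZMod 2) → M) :
    ∏ α, f α = (∏ α : Fin n → ZMod 2, f (Fin.cons 0 α)) *
      ∏ α : Fin n → ZMod 2, f (Fin.cons 1 α) := by
  rw [← Fintype.prod_equiv (Fin.consEquiv (fun _ : Fin (n + 1) => ZMod 2))
    (fun p => f (Fin.cons p.1 p.2)) f (fun _ => rfl), Fintype.prod_prod_type]
  exact Fin.prod_univ_two (fun a : Fin 2 => ∏ α : Fin n → ZMod 2,
    f (Fin.cons (α := fun _ => ZMod 2) a α))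

/-- Translating the argument of `spanPoly` adds a constant, that is, `spanPoly` is additive in
characteristic two; moreover its derivative is constant. -/
lemma spanPoly_additive {A : Type} [CommRing A] [Algebra (ZMod 2) A] [CharP A 2] (n : ℕ)
    (x : Fin n → A) :
    (∀ a, (spanPoly n x).comp (Polynomial.X + Polynomial.C a) =
      spanPoly n x + Polynomial.C ((spanPoly n x).eval a)) ∧
    ∃ c, (spanPoly n x).derivative = Polynomial.C c := by
  induction n with
  | zero => simp [spanPoly]; exact ⟨1, by simp⟩
  | succ n ih =>
    obtain ⟨h1, c, h2⟩ := ih (Fin.tail x)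
    set P := spanPoly n (Fin.tail x) with hP
    have key : spanPoly (n + 1) x = P ^ 2 + Polynomial.C (P.eval (x 0)) * P := by
      have : spanPoly (n + 1) x = P * P.comp (Polynomial.X + Polynomial.C (x 0)) := by
        rw [hP]
        unfold spanPoly
        rw [prod_fin_cons, Polynomial.prod_comp]
        congr 1
        · apply Finset.prod_congr rfl; intro β _
          simp [Fin.sum_univ_succ, Fin.tail]
        · apply Finset.prod_congr rfl; intro β _
          simp [Fin.sum_univ_succ, Fin.tail, add_assoc]
      rw [this, h1]; ring
    refine ⟨fun a => ?_, P.eval (x 0) * c, ?_⟩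
    · have h3 : (P + Polynomial.C (P.eval a)) ^ 2 = P ^ 2 + Polynomial.C (P.eval a) ^ 2 :=
        CharTwo.add_sq _ _
      rw [key]
      simp only [Polynomial.add_comp, Polynomial.pow_comp, Polynomial.mul_comp, h1, h3,
        Polynomial.C_comp, Polynomial.eval_add, Polynomial.eval_mul, Polynomial.eval_pow,
        Polynomial.eval_C, map_add, map_mul, map_pow]
      ring
    · rw [key]
      simp [Polynomial.derivative_pow, h2, CharTwo.two_eq_zero (R := A)]

/-- The only odd exponent occurring in `spanPoly` is `1`, since its derivative is constant. -/
lemma spanPoly_coeff_odd {A : Type} [CommRing A] [Algebra (ZMod 2) A] [CharP A 2] (n : ℕ)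
    (x : Fin n → A) (s : ℕ) (hs : s ≠ 0) : (spanPoly n x).coeff (2 * s + 1) = 0 := by
  obtain ⟨_, c, h⟩ := spanPoly_additive n x
  have h1 := congrArg (fun p => p.coeff (2 * s)) h
  simp only [Polynomial.coeff_derivative] at h1
  rw [Polynomial.coeff_C_of_ne_zero (by omega)] at h1
  have : (2 : A) = 0 := CharTwo.two_eq_zero
  push_cast at h1
  rw [this] at h1
  simpa using h1

lemma spanPoly_coeff_two_pow {A : Type} [CommRing A] [Algebra (ZMod 2) A] [Nontrivial A] (n : ℕ)
    (x : Fin n → A) : (spanPoly n x).coeff (2 ^ n) = 1 := by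
  have hm : (spanPoly n x).Monic :=
    Polynomial.monic_prod_of_monic _ _ fun β _ => Polynomial.monic_X_add_C _
  have hd : (spanPoly n x).natDegree = 2 ^ n := by
    unfold spanPoly
    rw [Polynomial.natDegree_prod_of_monic _ _ fun β _ => Polynomial.monic_X_add_C _]
    simp only [Polynomial.natDegree_X_add_C]
    simp
  rw [← hd]; exact hm

lemma linF_eq (n : ℕ) (α : Fin n → ZMod 2) : linF n α = ∑ i, α i • X i := by
  unfold linF
  exact Finset.sum_congr rfl fun i _ => by rw [MvPolynomial.smul_eq_C_mul]

lemma linF_zero (n : ℕ) : linF n 0 = 0 := by simp [linF]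

lemma spanPoly_coeff_one (n : ℕ) :
    (spanPoly n (X : Fin n → MvPolynomial (Fin n) F2)).coeff 1 = dickson n := by
  unfold spanPoly dickson
  simp_rw [← linF_eq]
  rw [← Finset.mul_prod_erase _ _ (Finset.mem_univ (0 : Fin n → ZMod 2)),
    ← Finset.mul_prod_erase _ (fun α => if α = 0 then 1 else linF n α)
      (Finset.mem_univ (0 : Fin n → ZMod 2)), linF_zero]
  simp only [map_zero, add_zero, if_true, one_mul]
  rw [Polynomial.coeff_X_mul, Polynomial.coeff_zero_eq_eval_zero, Polynomial.eval_prod]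
  refine Finset.prod_congr rfl fun α hα => ?_
  simp [(Finset.mem_erase.1 hα).1]

lemma finSuccEquiv_dickson (n : ℕ) :
    finSuccEquiv F2 n (dickson (n + 1)) = Polynomial.C (dickson n) *
      spanPoly n (X : Fin n → MvPolynomial (Fin n) F2) := by
  have h0 : ∀ α : Fin n → ZMod 2, (Fin.cons 0 α : Fin (n + 1) → ZMod 2) = 0 ↔ α = 0 := by
    intro α
    constructor
    · intro h; ext i; simpa using congrFun h i.succ
    · rintro rfl; ext i; refine Fin.cases ?_ (fun i => ?_) i <;> simp
  have hC : ∀ a : ZMod 2, finSuccEquiv F2 n (C a) = Polynomial.C (C a) :=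
    fun a => (finSuccEquiv F2 n).commutes a
  have h1 : ∀ α : Fin n → ZMod 2, (Fin.cons 1 α : Fin (n + 1) → ZMod 2) ≠ 0 := by
    intro α h
    simpa using congrFun h 0
  unfold dickson spanPoly
  rw [prod_fin_cons, map_mul, map_prod, map_prod, map_prod]
  congr 1
  · refine Finset.prod_congr rfl fun α _ => ?_
    by_cases h : α = 0
    · rw [if_pos h, if_pos ((h0 α).2 h)]; simp
    · rw [if_neg h, if_neg (mt (h0 α).1 h)]
      simp [linF, Fin.sum_univ_succ, finSuccEquiv_X_succ, hC]
  · refine Finset.prod_congr rfl fun α _ => ?_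
    rw [if_neg (h1 α), ← linF_eq]
    simp [linF, Fin.sum_univ_succ, finSuccEquiv_X_zero, finSuccEquiv_X_succ, hC]

lemma coeff_sq_even {A : Type} [CommRing A] [CharP A 2] (p : Polynomial A) (n : ℕ) :
    (p ^ 2).coeff (2 * n) = p.coeff n ^ 2 := by
  rw [← Polynomial.map_frobenius_expand 2, Polynomial.coeff_map,
    Polynomial.coeff_expand_mul' (by norm_num), frobenius_def]

lemma coeff_sq_odd {A : Type} [CommRing A] [CharP A 2] (p : Polynomial A) (n : ℕ) :
    (p ^ 2).coeff (2 * n + 1) = 0 := by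
  rw [← Polynomial.map_frobenius_expand 2, Polynomial.coeff_map,
    Polynomial.coeff_expand (by norm_num), if_neg (by omega), map_zero]

lemma coeff_sq_mul_odd {A : Type} [CommRing A] [CharP A 2] (q L : Polynomial A)
    (hL : ∀ s, s ≠ 0 → L.coeff (2 * s + 1) = 0) (n : ℕ) :
    (q ^ 2 * L).coeff (2 * n + 1) = q.coeff n ^ 2 * L.coeff 1 := by
  rw [Polynomial.coeff_mul, Finset.sum_eq_single (2 * n, 1)]
  · rw [coeff_sq_even]
  · rintro ⟨a, b⟩ hab hne
    rw [Finset.HasAntidiagonal.mem_antidiagonal] at hab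
    simp only [ne_eq, Prod.mk.injEq, not_and] at hab hne ⊢
    rcases Nat.even_or_odd' a with ⟨c, rfl | rfl⟩
    · obtain ⟨s, rfl⟩ : ∃ s, b = 2 * s + 1 := ⟨n - c, by omega⟩
      rw [hL s (by omega), mul_zero]
    · rw [coeff_sq_odd, zero_mul]
  · intro h; simp at h

/-- In characteristic two, squaring shifts the binary digits of exponents, so the binary digits of
`r` can be peeled off one at a time: only the linear term of `L` contributes to an odd exponent. -/
lemma coeff_pow_two_pow_add {A : Type} [CommRing A] [CharP A 2] (L : Polynomial A)
    (hL : ∀ s, s ≠ 0 → L.coeff (2 * s + 1) = 0) (M t r : ℕ) (hr : r < 2 ^ t) :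
    (L ^ (2 ^ t + r)).coeff (2 ^ t * M + r) = L.coeff M ^ (2 ^ t) * L.coeff 1 ^ r := by
  induction t generalizing r with
  | zero =>
    obtain rfl : r = 0 := by simpa using hr
    simp
  | succ t ih =>
    rw [pow_succ] at hr
    rcases Nat.even_or_odd' r with ⟨s, rfl | rfl⟩
    · have h1 : 2 ^ (t + 1) + 2 * s = (2 ^ t + s) * 2 := by ring
      have h2 : 2 ^ (t + 1) * M + 2 * s = 2 * (2 ^ t * M + s) := by ring
      rw [h1, h2, pow_mul, coeff_sq_even, ih s (by omega)]; ring
    · have h1 : 2 ^ (t + 1) + (2 * s + 1) = (2 ^ t + s) * 2 + 1 := by ring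
      have h2 : 2 ^ (t + 1) * M + (2 * s + 1) = 2 * (2 ^ t * M + s) + 1 := by ring
      rw [h1, h2, pow_succ, pow_mul, coeff_sq_mul_odd _ _ hL, ih s (by omega)]; ring

/-- Extracting the coefficient of `x₀ ^ (2 ^ (t + n) + r)` turns the power `2 ^ t + r` of the
Dickson invariant in `n + 1` variables into its power `2 ^ t + 2 r` in `n` variables. -/
lemma dickson_pow_coeff (n t r : ℕ) (hr : r < 2 ^ t) :
    (finSuccEquiv F2 n (dickson (n + 1) ^ (2 ^ t + r))).coeff (2 ^ (t + n) + r) =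
      dickson n ^ (2 ^ t + 2 * r) := by
  rw [map_pow, finSuccEquiv_dickson, mul_pow, ← map_pow, Polynomial.coeff_C_mul, pow_add 2 t n,
    coeff_pow_two_pow_add _ (fun s hs => spanPoly_coeff_odd n X s hs) _ _ _ hr,
    spanPoly_coeff_two_pow, spanPoly_coeff_one]
  ring

/-- By induction on `n`: the bound `2 ^ (t + n) + r` on the exponent of the new variable also
dominates the bounds obtained for the exponents of the others. -/
lemma dickson_pow_exists_coeff (n t r : ℕ) (hr : r < 2 ^ t) :
    ∃ a : Fin n →₀ ℕ, coeff a (dickson n ^ (2 ^ t + r)) ≠ 0 ∧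
      ∀ i, a i ≤ 2 ^ (t + n - 1) + r := by
  induction n generalizing t r with
  | zero =>
    have h0 : dickson 0 = 1 :=
      Fintype.prod_eq_one _ fun α => if_pos (Subsingleton.elim _ _)
    exact ⟨0, by simp [h0], fun i => i.elim0⟩
  | succ n ih =>
    obtain ⟨a, ha, hb⟩ : ∃ a : Fin n →₀ ℕ, coeff a (dickson n ^ (2 ^ t + 2 * r)) ≠ 0 ∧
        ∀ i, a i ≤ 2 ^ (t + n) + r := by
      -- `2 ^ t + 2 * r` has leading binary digit `2 ^ t` or `2 ^ (t + 1)`.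
      by_cases h : 2 * r < 2 ^ t
      · obtain ⟨a, ha, hb⟩ := ih t (2 * r) h
        refine ⟨a, ha, fun i => (hb i).trans ?_⟩
        obtain ⟨n, rfl⟩ : ∃ n', n = n' + 1 := ⟨n - 1, by have := i.2; omega⟩
        have h1 : 2 ^ t ≤ 2 ^ (t + n) := Nat.pow_le_pow_right (by norm_num) (by omega)
        have h2 : 2 ^ (t + (n + 1)) = 2 ^ (t + n) * 2 := by rw [← add_assoc, pow_succ]
        have h3 : t + (n + 1) - 1 = t + n := by omega
        rw [h3]; omega
      · have h2 : 2 ^ (t + 1) = 2 ^ t * 2 := pow_succ _ _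
        obtain ⟨a, ha, hb⟩ := ih (t + 1) (2 * r - 2 ^ t) (by omega)
        have h3 : 2 ^ (t + 1) + (2 * r - 2 ^ t) = 2 ^ t + 2 * r := by omega
        rw [h3] at ha
        refine ⟨a, ha, fun i => (hb i).trans ?_⟩
        have h4 : t + 1 + n - 1 = t + n := by omega
        rw [h4]; omega
    refine ⟨Finsupp.cons (2 ^ (t + n) + r) a, ?_, fun i => ?_⟩
    · rw [← finSuccEquiv_coeff_coeff, dickson_pow_coeff n t r hr]
      exact ha
    · have h4 : t + (n + 1) - 1 = t + n := by omega
      rw [h4]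
      refine Fin.cases ?_ (fun i => ?_) i
      · simp
      · simpa using hb i

lemma linF_single (k : ℕ) (i : Fin k) : linF k (Pi.single i 1) = X i := by
  unfold linF
  rw [Finset.sum_eq_single i]
  · simp
  · intro b _ hb; simp [hb]
  · simp

/-- The standard basis vectors contribute the factor `∏ xᵢ ^ j` to `dickson k ^ j`, one power of
`∏ xᵢ` more than in `ePoly k j`. -/
lemma dickson_pow_eq (k j : ℕ) (hj : j ≠ 0) : dickson k ^ j = (∏ i, X i) * ePoly k j := by
  have h1 : dickson k = (∏ i, X i) * ∏ α ∈ Finset.univ.filter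
        (fun α : Fin k → ZMod 2 => α ≠ 0 ∧ ¬ ∃ i, α = Pi.single i 1), linF k α := by
    have h2 : ∏ i : Fin k, (X i : MvPolynomial (Fin k) F2) = ∏ α ∈ Finset.univ.filter
        (fun α : Fin k → ZMod 2 => ∃ i, α = Pi.single i 1), linF k α := by
      refine Finset.prod_bij (fun i _ => Pi.single i 1) ?_ ?_ ?_ ?_
      · intro i _; exact Finset.mem_filter.2 ⟨Finset.mem_univ _, i, rfl⟩
      · intro i _ i' _ h
        by_contra hne
        have := congrFun h i
        simp [hne] at this
      · rintro α hα
        obtain ⟨i, rfl⟩ := (Finset.mem_filter.1 hα).2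
        exact ⟨i, Finset.mem_univ _, rfl⟩
      · intro i _; rw [linF_single]
    rw [h2, dickson, Finset.prod_filter, Finset.prod_filter, ← Finset.prod_mul_distrib]
    refine Finset.prod_congr rfl fun α _ => ?_
    by_cases h0 : α = 0
    · have : ¬ ∃ i, α = Pi.single i 1 := by
        rintro ⟨i, hi⟩
        have := congrFun hi i
        simp [h0] at this
      simp [h0] at this ⊢
      simp [this]
    · by_cases hs : ∃ i, α = Pi.single i 1
      · simp [h0, hs]
      · simp [h0, hs]
  obtain ⟨j, rfl⟩ := Nat.exists_eq_succ_of_ne_zero hj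
  rw [h1, mul_pow, ePoly, Finset.prod_pow, Finset.prod_pow, Nat.succ_sub_one, pow_succ']
  ring

lemma ePoly_exists_coeff (d k j t r : ℕ) (hr : r ≤ 2 ^ t - 1) (hj : j = 2 ^ t + r)
    (hd : 2 ^ (t + k - 1) + r ≤ d) :
    ∃ a : Fin k →₀ ℕ, coeff a (ePoly k j) ≠ 0 ∧ ∀ i, a i < d := by
  have hp : 0 < 2 ^ t := by positivity
  obtain ⟨a, ha, hb⟩ := dickson_pow_exists_coeff k t r (by omega)
  have hX : (∏ i : Fin k, (X i : MvPolynomial (Fin k) F2)) =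
      monomial (∑ i, Finsupp.single i 1) 1 := by
    rw [monomial_sum_one]; rfl
  rw [← hj, dickson_pow_eq k j (by omega), hX, coeff_monomial_mul'] at ha
  split_ifs at ha with hle
  · refine ⟨_, by simpa using ha, fun i => ?_⟩
    have h1 := hle i
    have h2 := hb i
    simp [Finsupp.single_apply] at h1 ⊢
    omega
  · exact absurd rfl ha

lemma ePoly_isHomogeneous (k j : ℕ) : ∃ N, (ePoly k j).IsHomogeneous N := by
  have h : ∀ α, (linF k α).IsHomogeneous 1 := fun α =>
    IsHomogeneous.sum _ _ _ fun i _ => by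
      simpa using (isHomogeneous_C _ _).mul (isHomogeneous_X _ i)
  exact ⟨_, (IsHomogeneous.prod _ _ _ fun i _ => (isHomogeneous_X _ i).pow _).mul
    (IsHomogeneous.prod _ _ _ fun α _ => (h α).pow _)⟩

/-! ### Fibre integration -/

/-- The weight of an exponent under fibre integration over the projectivization of a bundle of
rank `l`: `x ^ n` integrates to the coefficient of index `n + 1 - l` of the inverse class `v`, and to
zero if `n + 1 < l`. Multiplying by `X ^ l` avoids the truncated subtraction. -/
def segre {Q : Type} [CommRing Q] (l : ℕ) (v : Polynomial Q) (n : ℕ) : Q :=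
  (v * Polynomial.X ^ l).coeff (n + 1)

/-- Fibre integration: the linear functional sending `∏ xᵢ ^ aᵢ` to the product of the weights
`segre l v aᵢ`. -/
def pushforward {Q : Type} [CommRing Q] (k l : ℕ) (v : Polynomial Q) :
    MvPolynomial (Fin k) Q →ₗ[Q] Q :=
  (basisMonomials (Fin k) Q).constr Q fun a => ∏ i, segre l v (a i)

lemma pushforward_monomial {Q : Type} [CommRing Q] (k l : ℕ) (v : Polynomial Q)
    (a : Fin k →₀ ℕ) (c : Q) :
    pushforward k l v (monomial a c) = c * ∏ i, segre l v (a i) := by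
  have h : monomial a c = c • basisMonomials (Fin k) Q a := by
    simp [coe_basisMonomials, smul_monomial]
  rw [h, map_smul, pushforward, Module.Basis.constr_basis, smul_eq_mul]

/-- The weights satisfy the linear recurrence whose characteristic polynomial is `β`. -/
lemma sum_segre {Q : Type} [CommRing Q] (l : ℕ) (w v : Polynomial Q) (hw : w.natDegree ≤ l)
    (hwv : w * v = 1) (n : ℕ) :
    ∑ s ∈ Finset.range (l + 1), w.coeff (l - s) * segre l v (n + s) = 0 := by
  have h0 : (w * (v * Polynomial.X ^ l)).coeff (n + l + 1) = 0 := by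
    rw [← mul_assoc, hwv, one_mul, Polynomial.coeff_X_pow, if_neg (by omega)]
  rw [Polynomial.coeff_mul, Finset.Nat.sum_antidiagonal_eq_sum_range_succ_mk] at h0
  rw [← Finset.sum_range_reflect, ← h0]
  have hsub : Finset.range (l + 1) ⊆ Finset.range (n + l + 1).succ :=
    Finset.range_subset_range.2 (by omega)
  rw [← Finset.sum_subset hsub]
  · refine Finset.sum_congr rfl fun s hs => ?_
    rw [Finset.mem_range] at hs
    unfold segre
    congr 2 <;> omega
  · intro s _ hs
    rw [Finset.mem_range] at hs
    rw [Polynomial.coeff_eq_zero_of_natDegree_lt (by omega), zero_mul]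

lemma pushforward_mul_beta {Q : Type} [CommRing Q] (k l : ℕ) (w v : Polynomial Q)
    (hw : w.natDegree ≤ l) (hwv : w * v = 1) (i : Fin k) (p : MvPolynomial (Fin k) Q) :
    pushforward k l v
      (p * ∑ s ∈ Finset.range (l + 1), X i ^ s * C (w.coeff (l - s))) = 0 := by
  induction p using MvPolynomial.induction_on' with
  | add p q hp hq => rw [add_mul, map_add, hp, hq, add_zero]
  | monomial a c =>
    have h : ∀ s, monomial a c * (X i ^ s * C (w.coeff (l - s))) =
        monomial (a + Finsupp.single i s) (c * w.coeff (l - s)) := by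
      intro s
      rw [X_pow_eq_monomial, mul_comm (monomial (Finsupp.single i s) 1), C_mul_monomial,
        monomial_mul, mul_one]
    have h2 : ∀ s, ∏ i', segre l v ((a + Finsupp.single i s) i') =
        segre l v (a i + s) * ∏ i' ∈ Finset.univ.erase i, segre l v (a i') := by
      intro s
      rw [← Finset.mul_prod_erase _ _ (Finset.mem_univ i)]
      congr 1
      · simp
      · refine Finset.prod_congr rfl fun i' hi' => ?_
        simp [(Finset.mem_erase.1 hi').1.symm]
    simp_rw [Finset.mul_sum, h, map_sum, pushforward_monomial, h2]
    have h3 := congrArg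
      (fun z => c * (z * ∏ i' ∈ Finset.univ.erase i, segre l v (a i')))
      (sum_segre l w v hw hwv (a i))
    simp only [zero_mul, mul_zero, Finset.sum_mul, Finset.mul_sum] at h3
    rw [← h3]
    exact Finset.sum_congr rfl fun s _ => by ring

lemma pushforward_eq_zero {Q : Type} [CommRing Q] (k l : ℕ) (w v : Polynomial Q)
    (hw : w.natDegree ≤ l) (hwv : w * v = 1) (p : MvPolynomial (Fin k) Q)
    (hp : p ∈ Ideal.span (Set.range fun i : Fin k =>
      ∑ s ∈ Finset.range (l + 1), X i ^ s * C (w.coeff (l - s)))) :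
    pushforward k l v p = 0 := by
  have key : ∀ q, pushforward k l v (q * p) = 0 := by
    induction hp using Submodule.span_induction with
    | mem x hx =>
      obtain ⟨i, rfl⟩ := hx
      exact pushforward_mul_beta k l w v hw hwv i
    | zero => simp
    | add x y _ _ hx hy => intro q; rw [mul_add, map_add, hx, hy, add_zero]
    | smul c x _ hx => intro q; rw [smul_eq_mul, ← mul_assoc]; exact hx _
  simpa using key 1

/-- Multiplying a homogeneous `e` by the monomial complementary to `x ^ a` isolates the
coefficient of `x ^ a`: all other monomials of `e` have an exponent exceeding that of `x ^ a`,
and integrate to zero because `v` has degree at most `m`. -/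
lemma pushforward_complement {Q : Type} [CommRing Q] (k l m : ℕ) (v : Polynomial Q)
    (hv : v.natDegree ≤ m) (e : MvPolynomial (Fin k) Q) (N : ℕ) (he : e.IsHomogeneous N)
    (a g : Fin k →₀ ℕ) (hag : ∀ i, g i + a i + 1 = l + m) (ha : coeff a e ≠ 0) :
    pushforward k l v (monomial g 1 * e) = coeff a e * v.coeff m ^ k := by
  have hs : ∀ b : Fin k →₀ ℕ, pushforward k l v (monomial g 1 * monomial b (coeff b e)) =
      coeff b e * ∏ i, (v * Polynomial.X ^ l).coeff (g i + b i + 1) := by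
    intro b
    rw [monomial_mul, one_mul, pushforward_monomial]; rfl
  conv_lhs => rw [e.as_sum, Finset.mul_sum, map_sum]
  simp_rw [hs]
  rw [Finset.sum_eq_single a]
  · congr 1
    have hc : v.coeff m ^ k = ∏ _i : Fin k, v.coeff m := by simp
    rw [hc]
    refine Finset.prod_congr rfl fun i _ => ?_
    rw [hag, add_comm l m, Polynomial.coeff_mul_X_pow]
  · intro b hb hne
    obtain ⟨i, hi⟩ : ∃ i, a i < b i := by
      by_contra! hle
      have h1 := he (mem_support_iff.1 hb)
      have h2 := he ha
      have hdeg : ∀ c : Fin k →₀ ℕ, Finsupp.weight (1 : Fin k → ℕ) c = ∑ i, c i := fun c => by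
        simp [Finsupp.weight_apply, Finsupp.sum_fintype]
      rw [hdeg] at h1 h2
      exact hne (Finsupp.ext fun i =>
        (Finset.sum_eq_sum_iff_of_le fun i _ => hle i).1 (h1.trans h2.symm) i (Finset.mem_univ i))
    rw [Finset.prod_eq_zero (Finset.mem_univ i), mul_zero]
    have := hag i
    obtain ⟨c, hc⟩ : ∃ c, g i + b i + 1 = c + l := ⟨g i + b i + 1 - l, by omega⟩
    rw [hc, Polynomial.coeff_mul_X_pow]
    exact Polynomial.coeff_eq_zero_of_natDegree_lt (by omega)
  · intro h
    exact absurd (mem_support_iff.2 ha) h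

/-! ### A ring with dual classes -/

/-- The Vandermonde determinant in the variables `y₁, …, y_m`. -/
def vdm (m : ℕ) : MvPolynomial (Fin m) F2 :=
  (Matrix.vandermonde (X : Fin m → MvPolynomial (Fin m) F2)).det

/-- The ideal `(y₁ ^ d, …, y_m ^ d)`. -/
def powIdeal (d m : ℕ) : Ideal (MvPolynomial (Fin m) F2) :=
  Ideal.span (Set.range fun i => X i ^ d)

/-- The colon ideal `(y₁ ^ d, …, y_m ^ d) : V` with `V` the Vandermonde determinant. -/
def vdmColon (d m : ℕ) : Ideal (MvPolynomial (Fin m) F2) where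
  carrier := {p | p * vdm m ∈ powIdeal d m}
  add_mem' := fun ha hb => by
    simp only [Set.mem_ofPred_eq, add_mul] at *
    exact Ideal.add_mem _ ha hb
  zero_mem' := by simp
  smul_mem' := fun c x hx => by
    simp only [Set.mem_ofPred_eq, smul_eq_mul, mul_assoc] at *
    exact Ideal.mul_mem_left _ _ hx

lemma mem_vdmColon {d m : ℕ} {p : MvPolynomial (Fin m) F2} :
    p ∈ vdmColon d m ↔ p * vdm m ∈ powIdeal d m := Iff.rfl

lemma coeff_eq_zero_of_mem_powIdeal (d m : ℕ) (p : MvPolynomial (Fin m) F2)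
    (hp : p ∈ powIdeal d m) (a : Fin m →₀ ℕ) (ha : ∀ i, a i < d) : coeff a p = 0 := by
  have h : powIdeal d m = Ideal.span ((fun s => monomial s (1 : F2)) ''
      Set.range fun i : Fin m => Finsupp.single i d) := by
    rw [powIdeal, ← Set.range_comp]
    congr 1
    exact congrArg _ (funext fun i => X_pow_eq_monomial)
  rw [h, mem_ideal_span_monomial_image] at hp
  by_contra hne
  obtain ⟨_, ⟨i, rfl⟩, hle⟩ := hp a (mem_support_iff.2 hne)
  have := hle i
  have := ha i
  simp at *
  omega

/-- The diagonal term `∏ yᵢ ^ i` of the Vandermonde determinant does not cancel. -/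
lemma coeff_vdm (m : ℕ) (a : Fin m →₀ ℕ) (ha : ∀ i, a i = i) : coeff a (vdm m) = 1 := by
  unfold vdm
  have hterm : ∀ σ : Equiv.Perm (Fin m),
      ∏ i, (Matrix.vandermonde (X : Fin m → MvPolynomial (Fin m) F2)) (σ i) i =
        monomial (∑ i : Fin m, Finsupp.single (σ i) (i : ℕ)) 1 := by
    intro σ
    rw [monomial_sum_one]
    exact Finset.prod_congr rfl fun i _ => by rw [Matrix.vandermonde_apply, X_pow_eq_monomial]
  have hval : ∀ (σ : Equiv.Perm (Fin m)) (i : Fin m),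
      (∑ i : Fin m, Finsupp.single (σ i) (i : ℕ)) (σ i) = i := by
    intro σ i
    rw [Finsupp.finsetSum_apply, Finset.sum_eq_single i]
    · simp
    · intro b _ hb
      rw [Finsupp.single_apply, if_neg (fun h => hb (σ.injective h))]
    · simp
  rw [Matrix.det_apply, coeff_sum, Finset.sum_eq_single 1]
  · rw [hterm, Equiv.Perm.sign_one, one_smul, coeff_monomial, if_pos]
    ext i
    rw [ha]
    exact hval 1 i
  · intro σ _ hσ
    rw [hterm, Units.smul_def, coeff_smul, coeff_monomial, if_neg, smul_zero]
    intro h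
    refine hσ (Equiv.ext fun i => Fin.ext ?_)
    rw [← ha (σ i), ← h, hval]; rfl
  · simp

lemma prod_X_pow_not_mem (d m k : ℕ) (h : k + m ≤ d) :
    (∏ i : Fin m, (X i : MvPolynomial (Fin m) F2)) ^ k ∉ vdmColon d m := by
  rw [mem_vdmColon]
  intro hmem
  set δ : Fin m →₀ ℕ := Finsupp.equivFunOnFinite.symm fun i => (i : ℕ) with hδ
  set κ : Fin m →₀ ℕ := Finsupp.equivFunOnFinite.symm fun _ => k with hκ
  have hX : (∏ i : Fin m, (X i : MvPolynomial (Fin m) F2)) ^ k = monomial κ 1 := by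
    rw [← Finset.prod_pow, monomial_eq, C_1, one_mul, Finsupp.prod_fintype _ _ (by simp)]
    rfl
  have h0 := coeff_eq_zero_of_mem_powIdeal d m _ hmem (κ + δ) (fun i => by
    have := i.2
    simp [hκ, hδ]; omega)
  rw [hX, coeff_monomial_mul, one_mul, coeff_vdm m δ (fun i => rfl)] at h0
  exact one_ne_zero h0

/-- The polynomial `∏ (T + yᵢ)`. -/
def rootPoly (m : ℕ) : Polynomial (MvPolynomial (Fin m) F2) :=
  ∏ i, (Polynomial.X + Polynomial.C (X i))

lemma rootPoly_monic (m : ℕ) : (rootPoly m).Monic :=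
  Polynomial.monic_prod_of_monic _ _ fun _ _ => Polynomial.monic_X_add_C _

lemma rootPoly_natDegree (m : ℕ) : (rootPoly m).natDegree = m := by
  unfold rootPoly
  rw [Polynomial.natDegree_prod_of_monic _ _ fun β _ => Polynomial.monic_X_add_C _]
  simp only [Polynomial.natDegree_X_add_C]
  simp

/-- The remainder of `T ^ d` modulo `∏ (T + yᵢ)` takes the value `yᵢ ^ d` at `yᵢ`; inverting the
Vandermonde system by the adjugate, its coefficients lie in the colon ideal. -/
lemma coeff_rem_mem (d m : ℕ) (n : ℕ) :
    ((Polynomial.X ^ d : Polynomial (MvPolynomial (Fin m) F2)) %ₘ rootPoly m).coeff n ∈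
      vdmColon d m := by
  set R := (Polynomial.X ^ d : Polynomial (MvPolynomial (Fin m) F2)) %ₘ rootPoly m with hR
  have hdeg : R.degree < m := by
    have := Polynomial.degree_modByMonic_lt
      (Polynomial.X ^ d : Polynomial (MvPolynomial (Fin m) F2)) (rootPoly_monic m)
    rwa [Polynomial.degree_eq_natDegree (rootPoly_monic m).ne_zero, rootPoly_natDegree] at this
  by_cases hn : n < m
  swap
  · rw [Polynomial.coeff_eq_zero_of_degree_lt
      (hdeg.trans_le (by exact_mod_cast (not_lt.1 hn)))]
    exact Ideal.zero_mem _
  have hnat : R.natDegree < m := by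
    by_cases h0 : R = 0
    · rw [h0, Polynomial.natDegree_zero]; omega
    · exact (Polynomial.natDegree_lt_iff_degree_lt h0).2 hdeg
  have hroot : ∀ i, (rootPoly m).eval (X i) = 0 := by
    intro i
    rw [rootPoly, Polynomial.eval_prod]
    refine Finset.prod_eq_zero (Finset.mem_univ i) ?_
    simp [CharTwo.add_self_eq_zero]
  have hval : ∀ i, R.eval (X i) = X i ^ d := by
    intro i
    have h := congrArg (Polynomial.eval (X i)) (Polynomial.modByMonic_add_div
      (Polynomial.X ^ d : Polynomial (MvPolynomial (Fin m) F2)) (rootPoly m))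
    rw [← hR] at h
    simpa [hroot i] using h
  -- The coefficients of `R` solve the Vandermonde system with right-hand side `yᵢ ^ d`.
  set M := Matrix.vandermonde (X : Fin m → MvPolynomial (Fin m) F2) with hM
  set c : Fin m → MvPolynomial (Fin m) F2 := fun s => R.coeff s with hc
  have hsys : M.mulVec c = fun i => X i ^ d := by
    funext i
    rw [← hval i, Polynomial.eval_eq_sum_range' hnat, ← Fin.sum_univ_eq_sum_range
      (fun s => R.coeff s * X i ^ s)]
    simp only [Matrix.mulVec, dotProduct, hM, hc, Matrix.vandermonde_apply]
    exact Finset.sum_congr rfl fun s _ => mul_comm _ _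
  have hadj := congrArg (M.adjugate.mulVec) hsys
  rw [Matrix.mulVec_mulVec, Matrix.adjugate_mul, Matrix.smul_mulVec, Matrix.one_mulVec] at hadj
  have hfin := congrFun hadj ⟨n, hn⟩
  rw [mem_vdmColon, mul_comm]
  have hv : vdm m * R.coeff n = (M.det • c) ⟨n, hn⟩ := rfl
  rw [hv, hfin]
  show ∑ i, M.adjugate ⟨n, hn⟩ i * X i ^ d ∈ powIdeal d m
  refine Ideal.sum_mem _ fun i _ => Ideal.mul_mem_left _ _
    (Ideal.subset_span (Set.mem_range_self
      (f := fun i : Fin m => (X i : MvPolynomial (Fin m) F2) ^ d) i))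

/-- A ring carrying mutually inverse total classes `w` and `v` of degrees `l` and `m` for which
the `k`-th power of the top class of `v` survives, for any `k ≤ l`. -/
lemma exists_dual_classes (l m k : ℕ) (hkl : k ≤ l) :
    ∃ (Q : Type) (_ : CommRing Q) (_ : Algebra F2 Q) (w v : Polynomial Q),
      w.natDegree ≤ l ∧ v.natDegree ≤ m ∧ w.coeff 0 = 1 ∧ v.coeff 0 = 1 ∧ w * v = 1 ∧
      v.coeff m ^ k ≠ 0 := by
  let S := MvPolynomial (Fin m) F2
  let P : Polynomial S := rootPoly m
  let W : Polynomial S := Polynomial.X ^ (l + m) /ₘ P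
  let R : Polynomial S := Polynomial.X ^ (l + m) %ₘ P
  have hPm : P.Monic := rootPoly_monic m
  have hPd : P.natDegree = m := rootPoly_natDegree m
  have hWd : W.natDegree = l := by
    show (Polynomial.X ^ (l + m) /ₘ P).natDegree = l
    rw [Polynomial.natDegree_divByMonic _ hPm, hPd, Polynomial.natDegree_X_pow]; omega
  have heq : R + P * W = Polynomial.X ^ (l + m) := Polynomial.modByMonic_add_div _ _
  have hWm : W.Monic := by
    have h1 : W.leadingCoeff = (Polynomial.X ^ (l + m) : Polynomial S).leadingCoeff := by
      refine Polynomial.leadingCoeff_divByMonic_of_monic hPm ?_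
      rw [Polynomial.degree_X_pow, Polynomial.degree_eq_natDegree hPm.ne_zero, hPd]
      exact_mod_cast Nat.le_add_left m l
    rw [Polynomial.Monic, h1, (Polynomial.monic_X_pow (l + m)).leadingCoeff]
  have hrefl : ∀ (N : ℕ) (p : Polynomial S), p.natDegree ≤ N → (p.reflect N).natDegree ≤ N := by
    intro N p hp
    rw [Polynomial.natDegree_le_iff_coeff_eq_zero]
    intro i hi
    rw [Polynomial.coeff_reflect, Polynomial.revAt_eq_self_of_lt hi]
    exact Polynomial.coeff_eq_zero_of_natDegree_lt (by omega)
  -- Homogenizing, `w` and `v` are the reversed polynomials of `W` and `P`.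
  let f : S →+* S ⧸ vdmColon (l + m) m := Ideal.Quotient.mk _
  refine ⟨S ⧸ vdmColon (l + m) m, inferInstance, inferInstance, (W.reflect l).map f,
    (P.reflect m).map f, (Polynomial.natDegree_map_le).trans (hrefl _ _ hWd.le),
    (Polynomial.natDegree_map_le).trans (hrefl _ _ hPd.le), ?_, ?_, ?_, ?_⟩
  · rw [Polynomial.coeff_map, Polynomial.coeff_reflect, Polynomial.revAt_le (Nat.zero_le _),
      Nat.sub_zero]
    have hlead := hWm.coeff_natDegree
    rw [hWd] at hlead
    rw [hlead, map_one]
  · rw [Polynomial.coeff_map, Polynomial.coeff_reflect, Polynomial.revAt_le (Nat.zero_le _),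
      Nat.sub_zero]
    have hlead := hPm.coeff_natDegree
    rw [hPd] at hlead
    rw [hlead, map_one]
  · have hR0 : (R.reflect (l + m)).map f = 0 := by
      ext i
      rw [Polynomial.coeff_map, Polynomial.coeff_reflect, Polynomial.coeff_zero]
      exact Ideal.Quotient.eq_zero_iff_mem.2 (coeff_rem_mem _ _ _)
    have h1 : (R + P * W).reflect (l + m) = 1 := by
      rw [heq, Polynomial.reflect_monomial, Polynomial.revAt_le le_rfl, Nat.sub_self, pow_zero]
    rw [Polynomial.reflect_add, mul_comm P W, Polynomial.reflect_mul W P hWd.le hPd.le] at h1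
    have h2 := congrArg (Polynomial.map f) h1
    rwa [Polynomial.map_add, hR0, zero_add, Polynomial.map_mul, Polynomial.map_one] at h2
  · rw [Polynomial.coeff_map, Polynomial.coeff_reflect, Polynomial.revAt_le le_rfl, Nat.sub_self,
      ← map_pow]
    intro h
    have hP0 : P.coeff 0 = ∏ i : Fin m, X i := by
      show (rootPoly m).coeff 0 = _
      rw [rootPoly, Polynomial.coeff_zero_eq_eval_zero, Polynomial.eval_prod]
      simp
    have h2 := Ideal.Quotient.eq_zero_iff_mem.1 h
    rw [hP0] at h2
    exact prod_X_pow_not_mem (l + m) m k (by omega) h2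

/-! ### Evaluation of the ring `R_{d,ℓ,k}` -/

/-- The evaluation of the polynomial ring over `RVar k l m` sending `w_s` and `w̄_s` to the
coefficients of given polynomials `w` and `v`, and keeping the variables `xᵢ`. -/
def evalHom {Q : Type} [CommRing Q] [Algebra F2 Q] (k l m : ℕ) (w v : Polynomial Q) :
    MvPolynomial (RVar k l m) F2 →+* MvPolynomial (Fin k) Q :=
  eval₂Hom (algebraMap F2 (MvPolynomial (Fin k) Q))
    (Sum.elim X (Sum.elim (fun s => C (w.coeff (s + 1))) (fun s => C (v.coeff (s + 1)))))

lemma evalHom_wP {Q : Type} [CommRing Q] [Algebra F2 Q] (k l m : ℕ) (w v : Polynomial Q)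
    (hw : w.natDegree ≤ l) (hw0 : w.coeff 0 = 1) (s : ℕ) :
    evalHom k l m w v (wP k l m s) = C (w.coeff s) := by
  unfold wP evalHom
  split_ifs with h0 h1
  · rw [h0, hw0, map_one, map_one]
  · rw [coe_eval₂Hom, eval₂_X]
    simp [Nat.sub_add_cancel (Nat.one_le_iff_ne_zero.2 h0)]
  · rw [Polynomial.coeff_eq_zero_of_natDegree_lt (by omega), map_zero, map_zero]

lemma evalHom_wBarP {Q : Type} [CommRing Q] [Algebra F2 Q] (k l m : ℕ) (w v : Polynomial Q)
    (hv : v.natDegree ≤ m) (hv0 : v.coeff 0 = 1) (s : ℕ) :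
    evalHom k l m w v (wBarP k l m s) = C (v.coeff s) := by
  unfold wBarP evalHom
  split_ifs with h0 h1
  · rw [h0, hv0, map_one, map_one]
  · rw [coe_eval₂Hom, eval₂_X]
    simp [Nat.sub_add_cancel (Nat.one_le_iff_ne_zero.2 h0)]
  · rw [Polynomial.coeff_eq_zero_of_natDegree_lt (by omega), map_zero, map_zero]

lemma evalHom_rename {Q : Type} [CommRing Q] [Algebra F2 Q] (k l m : ℕ) (w v : Polynomial Q)
    (p : MvPolynomial (Fin k) F2) :
    evalHom k l m w v (rename Sum.inl p) = map (algebraMap F2 Q) p := by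
  unfold evalHom
  induction p using MvPolynomial.induction_on with
  | C a => simp [MvPolynomial.algebraMap_apply]
  | add p q hp hq => simp only [map_add, hp, hq]
  | mul_X p i hp => rw [map_mul, map_mul, hp, map_mul]; simp

/-- If `w ⬝ v = 1`, the evaluation kills the relations `ρ_n`. -/
lemma evalHom_Irel {Q : Type} [CommRing Q] [Algebra F2 Q] (d k l : ℕ) (w v : Polynomial Q)
    (hw : w.natDegree ≤ l) (hw0 : w.coeff 0 = 1) (hv : v.natDegree ≤ d - l)
    (hv0 : v.coeff 0 = 1) (hwv : w * v = 1) (p : MvPolynomial (RVar k l (d - l)) F2)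
    (hp : p ∈ Irel d l k) : evalHom k l (d - l) w v p = 0 := by
  suffices h : Irel d l k ≤ RingHom.ker (evalHom k l (d - l) w v) from h hp
  refine Ideal.span_le.2 ?_
  rintro _ ⟨n, hn, rfl⟩
  show evalHom k l (d - l) w v (rhoP k l (d - l) n) = 0
  have h1 := congrArg (fun q => q.coeff n) hwv
  simp only [Polynomial.coeff_mul, Finset.Nat.sum_antidiagonal_eq_sum_range_succ_mk,
    Polynomial.coeff_one] at h1
  rw [if_neg (by have := hn.1; omega)] at h1
  simp only [rhoP, map_sum, map_mul, evalHom_wP k l (d - l) w v hw hw0,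
    evalHom_wBarP k l (d - l) w v hv hv0]
  have h2 := congrArg (C : Q → MvPolynomial (Fin k) Q) h1
  simpa only [map_sum, map_mul, map_zero] using h2

/-- If `1 ≤ k ≤ ℓ ≤ d-1`, `j = 2^t + r` with `0 ≤ r ≤ 2^t - 1`, and `d ≥ 2^{t+k-1} + r`,
then the image of `e_{k,j}` in `R_{d,ℓ,k}` is not in the ideal `⟨β₁, …, β_k⟩`. -/
theorem ePoly_not_mem_betaIdeal (d l k j t r : ℕ) (hk : 1 ≤ k) (hkl : k ≤ l)
    (hld : l ≤ d - 1) (hr : r ≤ 2 ^ t - 1) (hj : j = 2 ^ t + r)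
    (hd : 2 ^ (t + k - 1) + r ≤ d) :
    toR d l k (rename Sum.inl (ePoly k j)) ∉ betaIdeal d l k := by
  intro hmem
  obtain ⟨Q, _, _, w, v, hw, hv, hw0, hv0, hwv, hne⟩ := exists_dual_classes l (d - l) k hkl
  obtain ⟨a, ha, had⟩ := ePoly_exists_coeff d k j t r hr hj hd
  obtain ⟨N, hN⟩ := ePoly_isHomogeneous k j
  have ha1 : coeff a (ePoly k j) = 1 :=
    (by decide : ∀ z : ZMod 2, z ≠ 0 → z = 1) _ ha
  have hQ : (1 : Q) ≠ 0 := fun h => hne (by rw [← mul_one (_ ^ k), h, mul_zero])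
  let Φ : Rdlk d l k →+* MvPolynomial (Fin k) Q :=
    Ideal.Quotient.lift (Irel d l k) (evalHom k l (d - l) w v)
      (evalHom_Irel d k l w v hw hw0 hv hv0 hwv)
  have hΦ : ∀ p, Φ (toR d l k p) = evalHom k l (d - l) w v p := fun p => rfl
  set e : MvPolynomial (Fin k) Q := map (algebraMap F2 Q) (ePoly k j) with he
  have hβ : ∀ i, Φ (betaP d l k i) =
      ∑ s ∈ Finset.range (l + 1), X i ^ s * C (w.coeff (l - s)) := by
    intro i
    have hx : evalHom k l (d - l) w v (xP k l (d - l) i) = X i := by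
      simp [evalHom, xP]
    simp only [betaP, hΦ, map_sum, map_mul, map_pow, hx, evalHom_wP k l (d - l) w v hw hw0]
  have hin : e ∈ Ideal.span (Set.range fun i : Fin k =>
      ∑ s ∈ Finset.range (l + 1), X i ^ s * C (w.coeff (l - s))) := by
    have h1 := Ideal.mem_map_of_mem Φ hmem
    rw [hΦ, evalHom_rename, betaIdeal, Ideal.map_span, ← Set.range_comp] at h1
    have h2 : (Φ ∘ betaP d l k) = fun i : Fin k =>
      ∑ s ∈ Finset.range (l + 1), X i ^ s * C (w.coeff (l - s)) := funext hβ
    rwa [h2] at h1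
  have hea : coeff a e = 1 := by rw [he, coeff_map, ha1, map_one]
  have hpush := pushforward_complement k l (d - l) v hv e N (hN.map _) a
    (Finsupp.equivFunOnFinite.symm fun i => d - 1 - a i)
    (fun i => by
      have := had i
      simp only [Finsupp.equivFunOnFinite_symm_apply_apply]
      omega) (by rw [hea]; exact hQ)
  rw [pushforward_eq_zero k l w v hw hwv _ (Ideal.mul_mem_left _ _ hin), hea, one_mul] at hpush
  exact hne hpush.symm
end
end

section
/- Let d, ℓ, k, j be integers with 1 ≤ k ≤ ℓ ≤ d−1 and j ≥ 1. Then the image of e_{k,j} in R_{d,ℓ,k} lies in the ideal ⟨β₁, …, β_k⟩ of R_{d,ℓ,k} if and only if e_{k,j} lies in the ideal ⟨x₁^d, …, x_k^d⟩ of 𝔽₂[x₁,…,x_k]. -/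
/-!
The statement holds for every polynomial `f` in place of `e_{k,j}`: the map
`𝔽₂[x] / (x₁^d, …, x_k^d) → R / (β₁, …, β_k)` is well defined and injective.

Write `w(t) = t^l + w₁ t^{l-1} + ⋯ + w_l` and `w̄(t)` likewise, of degree `m = d - l`. The relations
say `w(t) w̄(t) = t^d`, and `βᵢ = w(xᵢ)`. Hence `xᵢ^d = βᵢ w̄(xᵢ)`, which gives well-definedness
(`toR_X_pow_mem`).

For injectivity, every nonzero ideal of `𝔽₂[x] / (xᵢ^d)` contains the socle element
`∏ xᵢ^{d-1}` (`mem_span_X_pow_of_map_eq_zero`), so it suffices to find a ring `C` in which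
`t^d = q(t) p(t)` with `q`, `p` monic of degrees `l`, `m`, together with roots `xᵢ` of `q` such that
`∏ xᵢ^{d-1} ≠ 0`. If `u(t) = (q(t) - q(0)) / t`, then `x^{d-1} = p(0) u(x)` for each root `x` of `q`
(`pow_eq_of_isRoot`), so the product is `p(0)^k ∏ u(xᵢ)`.

* Splitting off `m` generic roots `y₁, …, y_m` of `t^d` one after the other makes
  `p(0)^l = ± ∏ yᵢ^l` nonzero, because at each step the degree of the remaining polynomial
  exceeds `l` (`exists_factorization`). As `k ≤ l`, also `p(0)^k ≠ 0`.
* Adjoining `k` independent roots `xᵢ` of `q` keeps `p(0)^k ∏ u(xᵢ)` nonzero, because `u` is monic of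
  degree `l - 1 < deg q` (`exists_roots`).
-/

noncomputable section

open MvPolynomial Finset

/-! ### Adjoining generic roots -/

/-- `1, x, …, x^{n-1}` is linearly independent in `A[x]/(P)` for `P` monic of degree `n`, in the
form needed here. -/
lemma adjoinRoot_ne_zero {A : Type} [CommRing A] {P g : Polynomial A} (hP : P.Monic)
    (hg : g.Monic) (hdeg : g.natDegree < P.natDegree) {a : A} (ha : a ≠ 0) :
    AdjoinRoot.of P a * AdjoinRoot.mk P g ≠ 0 := by
  rw [← AdjoinRoot.mk_C, ← map_mul, Ne, AdjoinRoot.mk_eq_zero]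
  apply hP.not_dvd_of_natDegree_lt
  · intro h
    have := congrArg (fun f => Polynomial.coeff f g.natDegree) h
    simp [hg.coeff_natDegree] at this
    exact ha this
  · exact lt_of_le_of_lt (Polynomial.natDegree_C_mul_le a g) hdeg

/-- A monic polynomial `P` of degree `l + m` factors over some extension as `q * p`, with degrees
`l` and `m`, so that `p(0)^l` does not kill the given `a ≠ 0`. -/
lemma exists_factorization (l m : ℕ) : ∀ (A : Type) [CommRing A] (P : Polynomial A), P.Monic →
    P.natDegree = l + m → ∀ a : A, a ≠ 0 →
    ∃ (B : Type) (_ : CommRing B) (φ : A →+* B) (q p : Polynomial B),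
      q.Monic ∧ q.natDegree = l ∧ p.Monic ∧ p.natDegree = m ∧ P.map φ = q * p ∧
        φ a * p.coeff 0 ^ l ≠ 0 := by
  induction m with
  | zero =>
    intro A _ P hP hdeg a ha
    exact ⟨A, inferInstance, RingHom.id A, P, 1, hP, hdeg, Polynomial.monic_one, by simp,
      by simp, by simpa using ha⟩
  | succ m ih =>
    intro A _ P hP hdeg a ha
    have hnt : Nontrivial A := ⟨a, 0, ha⟩
    have hr : (P.map (AdjoinRoot.of P)).IsRoot (AdjoinRoot.root P) :=
      AdjoinRoot.isRoot_root P
    obtain ⟨P₁, hP₁⟩ := Polynomial.dvd_iff_isRoot.mpr hr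
    have ha₁ : AdjoinRoot.of P a * AdjoinRoot.root P ^ l ≠ 0 := by
      have := adjoinRoot_ne_zero hP (Polynomial.monic_X_pow l)
        (by rw [Polynomial.natDegree_X_pow]; omega) ha
      simpa using this
    have hnt₁ : Nontrivial (AdjoinRoot P) := ⟨_, 0, ha₁⟩
    have hmP := hP.map (AdjoinRoot.of P)
    have hm₁ : P₁.Monic := by
      rw [hP₁] at hmP
      exact (Polynomial.monic_X_sub_C _).of_mul_monic_left hmP
    have hdeg₁ : P₁.natDegree = l + m := by
      have h := congrArg Polynomial.natDegree hP₁
      rw [hP.natDegree_map, (Polynomial.monic_X_sub_C _).natDegree_mul hm₁,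
        Polynomial.natDegree_X_sub_C] at h
      omega
    obtain ⟨B, _, φ, q, p, hq, hql, hp, hpm, hqp, hne⟩ := ih (AdjoinRoot P) P₁ hm₁ hdeg₁ _ ha₁
    have hnt₂ : Nontrivial B := ⟨_, 0, hne⟩
    refine ⟨B, inferInstance, φ.comp (AdjoinRoot.of P), q,
      (Polynomial.X - Polynomial.C (φ (AdjoinRoot.root P))) * p, hq, hql,
      (Polynomial.monic_X_sub_C _).mul hp, ?_, ?_, ?_⟩
    · rw [(Polynomial.monic_X_sub_C _).natDegree_mul hp, Polynomial.natDegree_X_sub_C, hpm]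
      omega
    · rw [← Polynomial.map_map, hP₁, Polynomial.map_mul, hqp]
      simp
      ring
    · intro h
      apply hne
      rw [Polynomial.mul_coeff_zero, mul_pow] at h
      simp only [Polynomial.coeff_sub, Polynomial.coeff_X_zero, Polynomial.coeff_C_zero,
        zero_sub, RingHom.comp_apply, neg_pow (φ _)] at h
      rw [map_mul, map_pow]
      have h2 : ((-1 : B) ^ l) * (-1) ^ l = 1 := by rw [← mul_pow]; simp
      linear_combination (-1 : B) ^ l * h - φ (AdjoinRoot.of P a) * φ (AdjoinRoot.root P) ^ l *
        p.coeff 0 ^ l * h2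

/-- Over some extension there are `k` independent roots of `q`; here `q.divX` is
`(q(t) - q(0)) / t`. -/
lemma exists_roots (k : ℕ) : ∀ (B : Type) [CommRing B] (q : Polynomial B), q.Monic →
    1 ≤ q.natDegree → ∀ a : B, a ≠ 0 →
    ∃ (C : Type) (_ : CommRing C) (ψ : B →+* C) (x : Fin k → C),
      (∀ i, (q.map ψ).eval (x i) = 0) ∧ ψ a * ∏ i, (q.map ψ).divX.eval (x i) ≠ 0 := by
  induction k with
  | zero =>
    intro B _ q _ _ a ha
    exact ⟨B, inferInstance, RingHom.id B, Fin.elim0, fun i => i.elim0, by simpa using ha⟩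
  | succ k ih =>
    intro B _ q hq hdeg a ha
    have hdX : ∀ {S T : Type} [CommRing S] [CommRing T] (f : S →+* T) (r : Polynomial S),
        (r.map f).divX = r.divX.map f := by
      intro S T _ _ f r
      ext n
      simp [Polynomial.coeff_divX]
    have hu : q.divX.Monic := by
      rw [Polynomial.Monic, Polynomial.leadingCoeff, Polynomial.natDegree_divX_eq_natDegree_tsub_one,
        Polynomial.coeff_divX, Nat.sub_add_cancel hdeg]
      exact hq
    have ha₁ := adjoinRoot_ne_zero hq hu
      (by rw [Polynomial.natDegree_divX_eq_natDegree_tsub_one]; omega) ha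
    have hnt₁ : Nontrivial (AdjoinRoot q) := ⟨_, 0, ha₁⟩
    obtain ⟨C, _, ψ, x, hx, hne⟩ := ih (AdjoinRoot q) (q.map (AdjoinRoot.of q)) (hq.map _)
      (by rwa [hq.natDegree_map]) _ ha₁
    refine ⟨C, inferInstance, ψ.comp (AdjoinRoot.of q), Fin.cons (ψ (AdjoinRoot.root q)) x, ?_, ?_⟩
    · intro i
      rw [← Polynomial.map_map]
      refine Fin.cases ?_ (fun i => ?_) i
      · rw [Fin.cons_zero, Polynomial.eval_map_apply, Polynomial.eval_map, AdjoinRoot.eval₂_root,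
          map_zero]
      · simpa using hx i
    · rw [Polynomial.map_map] at hne
      rw [Fin.prod_univ_succ, Fin.cons_zero]
      simp only [Fin.cons_succ]
      have h0 : ((q.map (ψ.comp (AdjoinRoot.of q))).divX).eval (ψ (AdjoinRoot.root q)) =
          ψ (AdjoinRoot.mk q q.divX) := by
        rw [hdX, ← Polynomial.map_map, Polynomial.eval_map_apply, Polynomial.eval_map,
          ← AdjoinRoot.algebraMap_eq, ← Polynomial.aeval_def, AdjoinRoot.aeval_eq]
      rw [h0, ← mul_assoc]
      rw [map_mul] at hne
      exact hne

/-- If `q p = t^d` and `q(x) = 0`, then `x^{d-1} = p(0) u(x)` with `u(t) = (q(t) - q(0)) / t`: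
divide `t^d = q p` by `t`, using `q(0) p(0) = 0`. -/
lemma pow_eq_of_isRoot {C : Type} [CommRing C] {q p : Polynomial C} {n : ℕ}
    (h : q * p = Polynomial.X ^ (n + 1)) {x : C} (hx : q.eval x = 0) :
    x ^ n = p.coeff 0 * q.divX.eval x := by
  have h0 : q.coeff 0 * p.coeff 0 = 0 := by
    rw [← Polynomial.mul_coeff_zero, h]; simp
  have hC : Polynomial.C (q.coeff 0) * Polynomial.C (p.coeff 0) = 0 := by
    rw [← Polynomial.C_mul, h0, Polynomial.C_0]
  have key : Polynomial.X * (q * p.divX + Polynomial.C (p.coeff 0) * q.divX) =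
      Polynomial.X * Polynomial.X ^ n := by
    have e1 := Polynomial.divX_mul_X_add q
    have e2 := Polynomial.divX_mul_X_add p
    rw [← pow_succ', ← h]
    linear_combination q * e2 + Polynomial.C (p.coeff 0) * e1 - hC
  have := congrArg (Polynomial.eval x) (Polynomial.isRegular_X.left key)
  simp [hx] at this
  exact this.symm

/-! ### The socle of the truncated polynomial ring -/

/-- A ring homomorphism killing all `xᵢ^d` but not the socle generator `∏ xᵢ^{d-1}` has kernel
`(x₁^d, …, x_k^d)`. -/
lemma mem_span_X_pow_of_map_eq_zero {k n : ℕ} {C : Type} [CommRing C]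
    (φ : MvPolynomial (Fin k) F2 →+* C) (h0 : ∀ i, φ (X i) ^ (n + 1) = 0)
    (h1 : ∏ i, φ (X i) ^ n ≠ 0) (f : MvPolynomial (Fin k) F2) (hf : φ f = 0) :
    f ∈ Ideal.span (Set.range fun i : Fin k => (X i : MvPolynomial (Fin k) F2) ^ (n + 1)) := by
  classical
  by_contra hmem
  have hmon : ∀ (e : Fin k →₀ ℕ) (c : F2), monomial e c = MvPolynomial.C c * ∏ i, X i ^ e i := by
    intro e c
    rw [monomial_eq, Finsupp.prod_fintype _ _ (by simp)]
  have hsupp : (f.support.filter fun e => ∀ i, e i ≤ n).Nonempty := by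
    rw [Finset.nonempty_iff_ne_empty]
    intro hempty
    apply hmem
    rw [f.as_sum]
    refine Ideal.sum_mem _ fun e he => ?_
    have : ¬ ∀ i, e i ≤ n := fun h => by
      have : e ∈ f.support.filter fun e => ∀ i, e i ≤ n := Finset.mem_filter.mpr ⟨he, h⟩
      rw [hempty] at this
      simp at this
    push Not at this
    obtain ⟨i, hi⟩ := this
    rw [hmon]
    refine Ideal.mem_of_dvd _ ?_ (Ideal.subset_span ⟨i, rfl⟩)
    have hdvd : (X i : MvPolynomial (Fin k) F2) ^ e i ∣ ∏ i, X i ^ e i :=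
      Finset.dvd_prod_of_mem _ (Finset.mem_univ i)
    exact ((pow_dvd_pow _ hi).trans hdvd).mul_left _
  obtain ⟨e, he⟩ := Finset.exists_minimal hsupp
  obtain ⟨hef, hen⟩ := Finset.mem_filter.mp he.prop
  -- Multiplying by `∏ xᵢ^{n - eᵢ}` sends the minimal exponent `e` to the socle and all other
  -- monomials of `f` into the ideal.
  have hval : φ (f * ∏ i, X i ^ (n - e i)) = φ (MvPolynomial.C (coeff e f)) * ∏ i, φ (X i) ^ n := by
    conv_lhs => rw [f.as_sum]
    rw [Finset.sum_mul, map_sum, Finset.sum_eq_single_of_mem e hef]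
    · rw [hmon, mul_assoc, ← Finset.prod_mul_distrib, map_mul, map_prod]
      congr 1
      refine Finset.prod_congr rfl fun i _ => ?_
      rw [← pow_add, map_pow, Nat.add_sub_cancel' (hen i)]
    · intro e' he' hne
      have : ∃ i, e i < e' i := by
        by_contra! hle
        exact hne (le_antisymm hle (he.le_of_le (Finset.mem_filter.mpr
          ⟨he', fun i => (hle i).trans (hen i)⟩) hle))
      obtain ⟨i, hi⟩ := this
      rw [hmon, mul_assoc, ← Finset.prod_mul_distrib, map_mul, map_prod]
      rw [Finset.prod_eq_zero (Finset.mem_univ i), mul_zero]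
      have hi' := hen i
      rw [← pow_add, map_pow, show e' i + (n - e i) = (n + 1) + (e' i - e i - 1) by omega,
        pow_add, h0, zero_mul]
  rw [map_mul, hf, zero_mul] at hval
  have hc : coeff e f = 1 := by
    have hne := mem_support_iff.mp hef
    generalize coeff e f = c at hne
    revert c
    decide
  rw [hc, map_one, map_one, one_mul] at hval
  exact h1 hval.symm

/-! ### The ring `R` and factorizations of `t^d` -/

/-- In `R` the power `xᵢ^d = βᵢ w̄(xᵢ)` is a multiple of `βᵢ`. -/
lemma toR_X_pow_mem (d l k : ℕ) (hld : l ≤ d) (i : Fin k) :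
    toR d l k (xP k l (d - l) i) ^ d ∈ betaIdeal d l k := by
  set m := d - l with hm
  let W : Polynomial (Rdlk d l k) :=
    ∑ s ∈ Finset.range (l + 1), Polynomial.monomial s (toR d l k (wP k l m s))
  let Wb : Polynomial (Rdlk d l k) :=
    ∑ s ∈ Finset.range (m + 1), Polynomial.monomial s (toR d l k (wBarP k l m s))
  have hWc : ∀ s, W.coeff s = toR d l k (wP k l m s) := by
    intro s
    simp only [W, Polynomial.finsetSum_coeff, Polynomial.coeff_monomial]
    rw [Finset.sum_ite_eq']
    split_ifs with h
    · rfl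
    · rw [Finset.mem_range] at h
      rw [wP, if_neg (by omega), dif_neg (by omega), map_zero]
  have hWbc : ∀ s, Wb.coeff s = toR d l k (wBarP k l m s) := by
    intro s
    simp only [Wb, Polynomial.finsetSum_coeff, Polynomial.coeff_monomial]
    rw [Finset.sum_ite_eq']
    split_ifs with h
    · rfl
    · rw [Finset.mem_range] at h
      rw [wBarP, if_neg (by omega), dif_neg (by omega), map_zero]
  have hWd : W.natDegree ≤ l := Polynomial.natDegree_sum_le_of_forall_le _ _ fun s hs =>
    (Polynomial.natDegree_monomial_le _).trans (by rw [Finset.mem_range] at hs; omega)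
  have hWbd : Wb.natDegree ≤ m := Polynomial.natDegree_sum_le_of_forall_le _ _ fun s hs =>
    (Polynomial.natDegree_monomial_le _).trans (by rw [Finset.mem_range] at hs; omega)
  have hprod : W * Wb = 1 := by
    ext n
    rcases Nat.eq_zero_or_pos n with rfl | hn
    · rw [Polynomial.mul_coeff_zero, hWc, hWbc]
      simp [wP, wBarP]
    rw [Polynomial.coeff_one, if_neg (by omega)]
    by_cases hnd : n ≤ d
    · rw [Polynomial.coeff_mul, Finset.Nat.sum_antidiagonal_eq_sum_range_succ_mk]
      simp only [hWc, hWbc, ← map_mul]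
      rw [← map_sum]
      exact Ideal.Quotient.eq_zero_iff_mem.mpr (Ideal.subset_span ⟨n, ⟨hn, hnd⟩, rfl⟩)
    · apply Polynomial.coeff_eq_zero_of_natDegree_lt
      have := Polynomial.natDegree_mul_le (p := W) (q := Wb)
      omega
  have hrefl : W.reflect l * Wb.reflect m = Polynomial.X ^ d := by
    rw [← Polynomial.reflect_mul _ _ hWd hWbd, hprod, Polynomial.reflect_one,
      Nat.add_sub_cancel' hld]
  have hbeta : (W.reflect l).eval (toR d l k (xP k l m i)) = betaP d l k i := by
    rw [Polynomial.eval_eq_sum_range' (n := l + 1), betaP, map_sum]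
    · refine Finset.sum_congr rfl fun s hs => ?_
      rw [Finset.mem_range] at hs
      rw [Polynomial.coeff_reflect, Polynomial.revAt_le (by omega), hWc, map_mul, map_pow, mul_comm]
    · have := Polynomial.natDegree_reflect_le (N := l) (p := W)
      omega
  have hev := congrArg (Polynomial.eval (toR d l k (xP k l m i))) hrefl
  rw [Polynomial.eval_mul, hbeta, Polynomial.eval_pow, Polynomial.eval_X] at hev
  rw [← hev]
  exact Ideal.mul_mem_right _ _ (Ideal.subset_span ⟨i, rfl⟩)

/-- A factorization `t^d = q p` over `C` together with roots `xᵢ` of `q` induces a homomorphism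
`R / (β₁, …, β_k) → C`. -/
lemma eval₂_eq_zero_of_mem {d l k : ℕ} {C : Type} [CommRing C] (ι : F2 →+* C)
    {q p : Polynomial C} (hq : q.Monic) (hql : q.natDegree = l) (hp : p.Monic)
    (hpm : p.natDegree = d - l) (hld : l ≤ d) (hqp : q * p = Polynomial.X ^ d)
    (x : Fin k → C) (hx : ∀ i, q.eval (x i) = 0) (f : MvPolynomial (Fin k) F2)
    (hf : toR d l k (rename Sum.inl f) ∈ betaIdeal d l k) :
    eval₂Hom ι x f = 0 := by
  set m := d - l with hm
  -- `wP` and `wBarP` are 1-indexed by degree, hence the shift.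
  let Φ : MvPolynomial (RVar k l m) F2 →+* C :=
    eval₂Hom ι (Sum.elim x (Sum.elim (fun s => (q.reflect l).coeff (s + 1))
      (fun s => (p.reflect m).coeff (s + 1))))
  have hΦw : ∀ s, Φ (wP k l m s) = (q.reflect l).coeff s := by
    intro s
    rw [wP]
    split_ifs with h1 h2
    · subst h1
      rw [map_one, Polynomial.coeff_reflect, Polynomial.revAt_le (by omega), Nat.sub_zero, ← hql]
      exact hq.symm
    · simp only [Φ, coe_eval₂Hom, eval₂_X, Sum.elim_inr, Sum.elim_inl]
      rw [Nat.sub_add_cancel (by omega)]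
    · rw [map_zero, Polynomial.coeff_reflect, Polynomial.revAt_eq_self_of_lt (by omega),
        Polynomial.coeff_eq_zero_of_natDegree_lt (by omega)]
  have hΦb : ∀ s, Φ (wBarP k l m s) = (p.reflect m).coeff s := by
    intro s
    rw [wBarP]
    split_ifs with h1 h2
    · subst h1
      rw [map_one, Polynomial.coeff_reflect, Polynomial.revAt_le (by omega), Nat.sub_zero, ← hpm]
      exact hp.symm
    · simp only [Φ, coe_eval₂Hom, eval₂_X, Sum.elim_inr]
      rw [Nat.sub_add_cancel (by omega)]
    · rw [map_zero, Polynomial.coeff_reflect, Polynomial.revAt_eq_self_of_lt (by omega),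
        Polynomial.coeff_eq_zero_of_natDegree_lt (by omega)]
  have hrefl : q.reflect l * p.reflect m = 1 := by
    rw [← Polynomial.reflect_mul _ _ hql.le hpm.le, hqp, Nat.add_sub_cancel' hld,
      ← one_mul (Polynomial.X ^ d), ← Polynomial.C_1, Polynomial.reflect_C_mul_X_pow,
      Polynomial.revAt_le le_rfl]
    simp
  have hI : ∀ a ∈ Irel d l k, Φ a = 0 := by
    intro a ha
    have : Irel d l k ≤ RingHom.ker Φ := by
      rw [Irel, Ideal.span_le]
      rintro _ ⟨n, hn, rfl⟩
      have hn1 := hn.1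
      change Φ (rhoP k l m n) = 0
      rw [rhoP, map_sum]
      simp only [map_mul, hΦw, hΦb]
      rw [← Finset.Nat.sum_antidiagonal_eq_sum_range_succ
        (fun a b => (q.reflect l).coeff a * (p.reflect m).coeff b), ← Polynomial.coeff_mul, hrefl,
        Polynomial.coeff_one, if_neg (by omega)]
    exact this ha
  let Ψ : Rdlk d l k →+* C := Ideal.Quotient.lift _ Φ hI
  have hΨ : ∀ a, Ψ (toR d l k a) = Φ a := fun a => Ideal.Quotient.lift_mk _ _ _
  have hB : betaIdeal d l k ≤ RingHom.ker Ψ := by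
    rw [betaIdeal, Ideal.span_le]
    rintro _ ⟨i, rfl⟩
    change Ψ (betaP d l k i) = 0
    rw [betaP, hΨ, map_sum, ← hx i, Polynomial.eval_eq_sum_range' (n := l + 1) (by omega)]
    refine Finset.sum_congr rfl fun s hs => ?_
    rw [Finset.mem_range] at hs
    rw [map_mul, map_pow, hΦw, Polynomial.coeff_reflect, Polynomial.revAt_le (by omega),
      Nat.sub_sub_self (by omega), mul_comm]
    simp [Φ, xP]
  have := hB hf
  rw [RingHom.mem_ker, hΨ] at this
  rw [← this]
  simp only [Φ, coe_eval₂Hom, eval₂_rename]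
  rfl

/-- For `1 ≤ k ≤ ℓ ≤ d-1` and `j ≥ 1`: the image of `e_{k,j}` in `R_{d,ℓ,k}` lies in
`⟨β₁, …, β_k⟩` iff `e_{k,j} ∈ ⟨x₁^d, …, x_k^d⟩` in `𝔽₂[x₁,…,x_k]`. -/
theorem ePoly_mem_betaIdeal_iff (d l k j : ℕ) (hk : 1 ≤ k) (hkl : k ≤ l)
    (hld : l ≤ d - 1) (hj : 1 ≤ j) :
    toR d l k (rename Sum.inl (ePoly k j)) ∈ betaIdeal d l k ↔
      ePoly k j ∈
        Ideal.span (Set.range fun i : Fin k => (X i : MvPolynomial (Fin k) F2) ^ d) := by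
  constructor
  · intro hf
    obtain ⟨n, rfl⟩ : ∃ n, d = n + 1 := ⟨d - 1, by omega⟩
    obtain ⟨B, _, φ, q, p, hq, hql, hp, hpm, hqp, hne⟩ := exists_factorization l (n + 1 - l) F2
      (Polynomial.X ^ (n + 1)) (Polynomial.monic_X_pow _)
      (by rw [Polynomial.natDegree_X_pow]; omega) 1 one_ne_zero
    have hpk : p.coeff 0 ^ k ≠ 0 := by
      intro h
      apply hne
      rw [pow_eq_zero_of_le hkl h, mul_zero]
    obtain ⟨C, _, ψ, x, hx, hne'⟩ := exists_roots k B q hq (by omega) _ hpk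
    have hntC : Nontrivial C := ⟨_, 0, hne'⟩
    have hqp' : q.map ψ * p.map ψ = Polynomial.X ^ (n + 1) := by
      rw [← Polynomial.map_mul, ← hqp]
      simp
    refine mem_span_X_pow_of_map_eq_zero (eval₂Hom (ψ.comp φ) x) ?_ ?_ _
      (eval₂_eq_zero_of_mem (ψ.comp φ) (hq.map ψ) (by rw [hq.natDegree_map, hql])
        (hp.map ψ) (by rw [hp.natDegree_map, hpm]) (by omega) hqp' x hx _ hf)
    · intro i
      have h := congrArg (Polynomial.eval (x i)) hqp'
      rw [Polynomial.eval_mul, hx, zero_mul, Polynomial.eval_pow, Polynomial.eval_X] at h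
      simpa using h.symm
    · simp only [coe_eval₂Hom, eval₂_X]
      rw [Finset.prod_congr rfl fun i _ => pow_eq_of_isRoot hqp' (hx i), Finset.prod_mul_distrib,
        Finset.prod_const, Finset.card_univ, Fintype.card_fin, Polynomial.coeff_map, ← map_pow]
      exact hne'
  · intro hf
    have hle : Ideal.span (Set.range fun i : Fin k => (X i : MvPolynomial (Fin k) F2) ^ d) ≤
        (betaIdeal d l k).comap ((toR d l k).comp (rename Sum.inl).toRingHom) := by
      rw [Ideal.span_le]
      rintro _ ⟨i, rfl⟩
      have := toR_X_pow_mem d l k (by omega) i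
      simpa [xP] using this
    exact hle hf
end
end

section
/- Let d, ℓ, k be integers with 1 ≤ k ≤ ℓ ≤ d−1. The kernel of the composite ring homomorphism 𝔽₂[x₁,…,x_k] → R_{d,ℓ,k} → R_{d,ℓ,k}/⟨β₁,…,β_k⟩ (sending each variable x_i to the class of x_i) equals the ideal ⟨x₁^d, …, x_k^d⟩. Equivalently, the induced ring homomorphism 𝔽₂[x₁,…,x_k]/⟨x₁^d,…,x_k^d⟩ → R_{d,ℓ,k}/⟨β₁,…,β_k⟩ is injective. -/
/-! Write `W = ∑ w_{ℓ-s} X ^ s` and `W̄ = ∑ w̄_{d-ℓ-s} X ^ s`. The relations `ρ_m` say exactly that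
`W * W̄ = X ^ d`, and `β_i = W(x_i)`. Hence `x_i ^ d = W(x_i) W̄(x_i)` is zero modulo the `β_i`,
which gives one inclusion (`betaP_dvd`).

Conversely, `∏ x_i ^ (d - 1)` generates the socle of `𝔽₂[x₁, …, x_k] / ⟨x_i ^ d⟩`, so it suffices
that this product survives in the quotient (`prod_pow_mem_of_not_le`). A homomorphism from
the quotient to a ring `A` is a factorisation `X ^ d = P * Q` into monic polynomials of degrees
`ℓ` and `d - ℓ`, together with `k` roots of `P` (`exists_point`). Such a point not killing the
product is built by adjoining roots.

* Splitting off `d - ℓ` successive linear factors `X - y_j` of `X ^ d` gives `Q = ∏ (X - y_j)`.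
  Each `y_j` is adjoined as a root of a monic polynomial of degree greater than `ℓ`, so
  `Q(0) ^ e = ± ∏ y_j ^ e` is nonzero for `e ≤ ℓ` (`exists_factorization`).
* Adjoining `k` independent roots `x_i` of `P`, the coefficient of `∏ x_i ^ (ℓ - 1)` in
  `∏ x_i ^ (d - 1)` is `Q(0) ^ k` (`exists_roots`), which is nonzero because `k ≤ ℓ`.
-/


noncomputable section

open MvPolynomial Finset

/-! ### Adjoining roots of monic factors of `X ^ d` -/

/-- If `W` is monic and `c * y ^ e = 0` for the adjoined root `y` of `W`, with `e < deg W`,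
then `c = 0`: the powers of `y` below `deg W` are independent. -/
lemma eq_zero_of_of_mul_root_pow {A : Type} [CommRing A] {W : Polynomial A} (hW : W.Monic)
    {e : ℕ} (he : e < W.natDegree) {c : A}
    (h : AdjoinRoot.of W c * AdjoinRoot.root W ^ e = 0) : c = 0 := by
  have h1 : AdjoinRoot.mk W (Polynomial.C c * Polynomial.X ^ e) = 0 := by
    simpa using h
  rw [AdjoinRoot.mk_eq_zero] at h1
  by_contra hc
  refine hW.not_dvd_of_natDegree_lt ?_ ?_ h1
  · simpa [Polynomial.C_mul_X_pow_eq_monomial] using hc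
  · rwa [Polynomial.natDegree_C_mul_X_pow e c hc]

/-- For the adjoined root `y` of a monic factor `W` of `X ^ d = W * V`, the coefficient of
`y ^ (deg W - 1)` in `y ^ (d - 1)` is `V(0)`; in particular `c * y ^ (d - 1) = 0` forces
`c * V(0) = 0`. -/
lemma mul_coeff_zero_of_of_mul_root_pow {A : Type} [CommRing A] {W V : Polynomial A}
    (hW : W.Monic) {d : ℕ} (hd : 1 ≤ d) (hWV : W * V = Polynomial.X ^ d) {c : A}
    (h : AdjoinRoot.of W c * AdjoinRoot.root W ^ (d - 1) = 0) : c * V.coeff 0 = 0 := by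
  have h1 : AdjoinRoot.mk W (Polynomial.C c * Polynomial.X ^ (d - 1)) = 0 := by
    simpa using h
  rw [AdjoinRoot.mk_eq_zero] at h1
  obtain ⟨g, hg⟩ := h1
  have hX : (Polynomial.X : Polynomial A) ^ d = Polynomial.X ^ (d - 1) * Polynomial.X := by
    rw [← pow_succ]; congr 1; omega
  have h2 : W * (Polynomial.C c * V) = W * (g * Polynomial.X) := by
    calc W * (Polynomial.C c * V) = Polynomial.C c * (W * V) := by ring
      _ = (Polynomial.C c * Polynomial.X ^ (d - 1)) * Polynomial.X := by rw [hWV, hX]; ring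
      _ = _ := by rw [hg]; ring
  have h3 := hW.isRegular.left h2
  simpa using congrArg (fun p => Polynomial.coeff p 0) h3

/-- A factorisation of `X ^ (l + m)` into monic polynomials of degrees `l` and `m` for which the
constant term of the second factor has nonzero `e`-th power, for any `e ≤ l`. It is obtained by
splitting off `m` linear factors of `X ^ (l + m)` one at a time. -/
lemma exists_factorization_s3 (m : ℕ) : ∀ l e : ℕ, e ≤ l →
    ∃ (B : Type) (_ : CommRing B) (_ : F2 →+* B) (P Q : Polynomial B),
      P.Monic ∧ Q.Monic ∧ P.natDegree = l ∧ Q.natDegree = m ∧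
        P * Q = Polynomial.X ^ (l + m) ∧ Q.coeff 0 ^ e ≠ 0 := by
  induction m with
  | zero =>
    intro l e _
    exact ⟨F2, inferInstance, RingHom.id _, Polynomial.X ^ l, 1, Polynomial.monic_X_pow l,
      Polynomial.monic_one, by simp, by simp, by simp, by simp⟩
  | succ m ih =>
    intro l e hel
    obtain ⟨B, _, ι, P, Q, hP, hQ, hPd, hQd, hPQ, hne⟩ := ih (l + 1) e (by omega)
    have hB : Nontrivial B := nontrivial_of_ne _ _ hne
    have hinj : Function.Injective (AdjoinRoot.of P) := by
      refine (injective_iff_map_eq_zero _).2 fun c h => ?_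
      exact eq_zero_of_of_mul_root_pow hP (e := 0) (by omega) (by rw [h, zero_mul])
    have hB' : Nontrivial (AdjoinRoot P) := hinj.nontrivial
    set y := AdjoinRoot.root P with hy
    obtain ⟨P', hP'⟩ : (Polynomial.X - Polynomial.C y) ∣ P.map (AdjoinRoot.of P) := by
      rw [Polynomial.dvd_iff_isRoot, Polynomial.IsRoot, Polynomial.eval_map, hy,
        AdjoinRoot.eval₂_root]
    have hmon : (Polynomial.X - Polynomial.C y).Monic := Polynomial.monic_X_sub_C y
    have hP'm : P'.Monic := hmon.of_mul_monic_left (hP' ▸ hP.map _)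
    refine ⟨AdjoinRoot P, inferInstance, (AdjoinRoot.of P).comp ι, P',
      (Polynomial.X - Polynomial.C y) * Q.map (AdjoinRoot.of P), hP'm,
      hmon.mul (hQ.map _), ?_, ?_, ?_, ?_⟩
    · have h := congrArg Polynomial.natDegree hP'
      rw [hP.natDegree_map, hmon.natDegree_mul hP'm, Polynomial.natDegree_X_sub_C, hPd] at h
      omega
    · rw [hmon.natDegree_mul (hQ.map _), Polynomial.natDegree_X_sub_C, hQ.natDegree_map, hQd]
      omega
    · have h := congrArg (Polynomial.map (AdjoinRoot.of P)) hPQ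
      rw [Polynomial.map_mul, hP', Polynomial.map_pow, Polynomial.map_X] at h
      rw [show l + (m + 1) = l + 1 + m by omega, ← h]
      ring
    · intro h0
      rw [Polynomial.mul_coeff_zero, mul_pow] at h0
      simp only [Polynomial.coeff_sub, Polynomial.coeff_X_zero, Polynomial.coeff_C_zero,
        zero_sub, Polynomial.coeff_map] at h0
      refine hne (eq_zero_of_of_mul_root_pow hP (e := e) (by omega) ?_)
      rw [map_pow, mul_comm, ← hy]
      rw [neg_pow, mul_assoc] at h0
      exact (IsUnit.mul_right_eq_zero ((isUnit_one.neg).pow e)).1 h0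

/-- The ring obtained by adjoining `k` roots of `W` independently of one another, where
`W * V = X ^ d`: multiplication by the product of their `(d - 1)`-st powers is controlled by
`V(0) ^ k`. -/
lemma exists_roots_s3 {B : Type} [CommRing B] {W V : Polynomial B} (hW : W.Monic) {d : ℕ}
    (hd : 1 ≤ d) (hWV : W * V = Polynomial.X ^ d) (k : ℕ) :
    ∃ (A : Type) (_ : CommRing A) (φ : B →+* A) (x : Fin k → A),
      (∀ i, W.eval₂ φ (x i) = 0) ∧
        ∀ c : B, φ c * ∏ i, x i ^ (d - 1) = 0 → c * V.coeff 0 ^ k = 0 := by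
  induction k with
  | zero => exact ⟨B, inferInstance, RingHom.id B, Fin.elim0, fun i => i.elim0, by simp⟩
  | succ k ih =>
    obtain ⟨A, _, φ, x, hx, hc⟩ := ih
    set ψ := AdjoinRoot.of (W.map φ) with hψ
    refine ⟨AdjoinRoot (W.map φ), inferInstance, ψ.comp φ,
      Fin.cons (AdjoinRoot.root (W.map φ)) (fun i => ψ (x i)), ?_, ?_⟩
    · intro i
      refine Fin.cases ?_ (fun i => ?_) i
      · rw [Fin.cons_zero, ← Polynomial.eval₂_map, hψ, AdjoinRoot.eval₂_root]
      · rw [Fin.cons_succ, ← Polynomial.hom_eval₂, hx, map_zero]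
    · intro c h
      rw [Fin.prod_univ_succ] at h
      simp only [Fin.cons_zero, Fin.cons_succ, RingHom.comp_apply] at h
      have h1 : (φ c * ∏ i, x i ^ (d - 1)) * (V.map φ).coeff 0 = 0 := by
        refine mul_coeff_zero_of_of_mul_root_pow (hW.map φ) hd (d := d) ?_ ?_
        · rw [← Polynomial.map_mul, hWV, Polynomial.map_pow, Polynomial.map_X]
        · rw [← h, map_mul, map_prod]
          simp only [map_pow]
          ring
      have h2 := hc (c * V.coeff 0) (by
        rw [← h1, map_mul, Polynomial.coeff_map]; ring)
      rw [← h2]; ring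

/-! ### The socle of `𝔽₂[x₁, …, x_k] / ⟨x₁ ^ d, …, x_k ^ d⟩` -/

/-- The ideal `⟨X₁ ^ d, …, X_k ^ d⟩` has the product of the `X_i ^ (d - 1)` as a socle generator:
an ideal of `𝔽₂[X₁, …, X_k]` properly containing it contains that product. -/
lemma prod_pow_mem_of_not_le {k d : ℕ} {J : Ideal (MvPolynomial (Fin k) F2)}
    (hJ : Ideal.span (Set.range fun i : Fin k => (X i : MvPolynomial (Fin k) F2) ^ d) ≤ J)
    (hlt : ¬ J ≤ Ideal.span (Set.range fun i : Fin k => (X i : MvPolynomial (Fin k) F2) ^ d)) :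
    ∏ i : Fin k, (X i : MvPolynomial (Fin k) F2) ^ (d - 1) ∈ J := by
  classical
  obtain ⟨f, hfJ, hf⟩ := SetLike.not_le_iff_exists.1 hlt
  have hmono : ∀ (b : Fin k →₀ ℕ) (c : F2) (i : Fin k), d ≤ b i →
      monomial b c ∈
        Ideal.span (Set.range fun i : Fin k => (X i : MvPolynomial (Fin k) F2) ^ d) := by
    intro b c i hi
    have : monomial b c = monomial (b - Finsupp.single i d) c * X i ^ d := by
      rw [X_pow_eq_monomial, monomial_mul, mul_one, tsub_add_cancel_of_le]
      simpa using hi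
    rw [this]
    exact Ideal.mul_mem_left _ _ (Ideal.subset_span ⟨i, rfl⟩)
  -- the monomials of `f` outside the monomial ideal
  set S := f.support.filter (fun b => ∀ i, b i < d) with hS
  have hSne : S.Nonempty := by
    rw [Finset.nonempty_iff_ne_empty]
    intro h
    apply hf
    rw [f.as_sum]
    refine Ideal.sum_mem _ fun b hb => ?_
    have hb' : b ∉ S := by rw [h]; simp
    simp only [hS, Finset.mem_filter, hb, true_and, not_forall, not_lt] at hb'
    obtain ⟨i, hi⟩ := hb'
    exact hmono b _ i hi
  obtain ⟨a, haS, hamin⟩ := S.exists_min_image (fun b => ∑ i, b i) hSne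
  rw [hS, Finset.mem_filter] at haS
  obtain ⟨haf, had⟩ := haS
  set t : Fin k →₀ ℕ := Finsupp.equivFunOnFinite.symm (fun i => d - 1 - a i) with ht
  have hti : ∀ i, t i = d - 1 - a i := fun i => by simp [ht]
  have hprod : ∏ i : Fin k, (X i : MvPolynomial (Fin k) F2) ^ (d - 1) = monomial (t + a) 1 := by
    rw [monomial_eq, map_one, one_mul, Finsupp.prod_fintype _ _ (by simp)]
    refine Finset.prod_congr rfl fun i _ => ?_
    rw [Finsupp.add_apply, hti]
    have := had i
    congr 1; omega
  have hca : coeff a f = 1 := by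
    have h := mem_support_iff.1 haf
    generalize coeff a f = c at h
    revert c; decide
  have hmem : monomial t 1 * f ∈ J := J.mul_mem_left _ hfJ
  rw [f.as_sum, Finset.mul_sum, ← Finset.add_sum_erase _ _ haf, monomial_mul, hca, one_mul,
    ← hprod] at hmem
  refine (Ideal.add_mem_iff_left J (Ideal.sum_mem _ fun b hb => ?_)).1 hmem
  rw [Finset.mem_erase] at hb
  rw [monomial_mul]
  apply hJ
  obtain ⟨i, hi⟩ : ∃ i, a i < b i := by
    by_contra! hle
    by_cases hbd : ∀ i, b i < d
    · have hbS : b ∈ S := by rw [hS, Finset.mem_filter]; exact ⟨hb.2, hbd⟩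
      have hsum := hamin b hbS
      refine hb.1 (Finsupp.ext fun i => ?_)
      refine le_antisymm (hle i) ?_
      by_contra! hlt'
      exact absurd hsum (not_le.2 (Finset.sum_lt_sum (fun i _ => hle i) ⟨i, mem_univ i, hlt'⟩))
    · push Not at hbd
      obtain ⟨i, hi⟩ := hbd
      exact absurd (hle i) (by have := had i; omega)
  refine hmono _ _ i ?_
  rw [Finsupp.add_apply, hti]
  omega

/-! ### The relation `x_i ^ d = 0` modulo `β_i` -/

lemma wP_eq_zero {k l m s : ℕ} (h : l < s) : wP k l m s = 0 := by
  rw [wP, if_neg (by omega), dif_neg (by omega)]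

lemma wBarP_eq_zero {k l m s : ℕ} (h : m < s) : wBarP k l m s = 0 := by
  rw [wBarP, if_neg (by omega), dif_neg (by omega)]

/-- All relations `ρ_n` with `n ≥ 1` vanish in `R_{d,ℓ,k}`, those with `n > d` being empty. -/
lemma toR_rhoP {d l k n : ℕ} (hld : l ≤ d) (hn : n ≠ 0) : toR d l k (rhoP k l (d - l) n) = 0 := by
  by_cases h : n ≤ d
  · exact Ideal.Quotient.eq_zero_iff_mem.2 (Ideal.subset_span ⟨n, ⟨by omega, h⟩, rfl⟩)
  · rw [rhoP, Finset.sum_eq_zero, map_zero]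
    intro s _
    by_cases hs : l < s
    · rw [wP_eq_zero hs, zero_mul]
    · rw [wBarP_eq_zero (s := n - s) (by omega), mul_zero]

/-- The factorisation `X ^ d = W * W̄` over `R_{d,ℓ,k}`, evaluated at `x_i`. -/
lemma betaP_dvd {d l k : ℕ} (hld : l ≤ d) (i : Fin k) :
    betaP d l k i ∣ toR d l k (xP k l (d - l) i) ^ d := by
  set U : Polynomial (Rdlk d l k) :=
    ∑ s ∈ range (l + 1), Polynomial.monomial s (toR d l k (wP k l (d - l) s)) with hU
  set V : Polynomial (Rdlk d l k) :=
    ∑ s ∈ range (d - l + 1), Polynomial.monomial s (toR d l k (wBarP k l (d - l) s)) with hV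
  have hUc : ∀ s, U.coeff s = toR d l k (wP k l (d - l) s) := by
    intro s
    simp only [hU, Polynomial.finsetSum_coeff, Polynomial.coeff_monomial]
    rw [Finset.sum_ite_eq']
    split_ifs with h
    · rfl
    · rw [wP_eq_zero (by simpa using h), map_zero]
  have hVc : ∀ s, V.coeff s = toR d l k (wBarP k l (d - l) s) := by
    intro s
    simp only [hV, Polynomial.finsetSum_coeff, Polynomial.coeff_monomial]
    rw [Finset.sum_ite_eq']
    split_ifs with h
    · rfl
    · rw [wBarP_eq_zero (by simpa using h), map_zero]
  have hUd : U.natDegree ≤ l := Polynomial.natDegree_le_iff_coeff_eq_zero.2 fun s hs => by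
    rw [hUc, wP_eq_zero hs, map_zero]
  have hVd : V.natDegree ≤ d - l := Polynomial.natDegree_le_iff_coeff_eq_zero.2 fun s hs => by
    rw [hVc, wBarP_eq_zero hs, map_zero]
  have hUV : U * V = 1 := by
    ext n
    rw [Polynomial.coeff_mul, Finset.Nat.sum_antidiagonal_eq_sum_range_succ_mk,
      Polynomial.coeff_one]
    simp only [hUc, hVc]
    split_ifs with h
    · subst h; simp [wP, wBarP]
    · have := toR_rhoP (k := k) hld h
      simpa [rhoP] using this
  have hrefl := Polynomial.reflect_mul U V hUd hVd
  rw [hUV, show l + (d - l) = d by omega, Polynomial.reflect_one] at hrefl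
  have hev := congrArg (Polynomial.eval (toR d l k (xP k l (d - l) i))) hrefl
  rw [Polynomial.eval_pow, Polynomial.eval_X, Polynomial.eval_mul] at hev
  rw [hev]
  refine Dvd.intro _ (congrArg (· * _) ?_)
  have hRd : (Polynomial.reflect l U).natDegree < l + 1 := by
    have := Polynomial.natDegree_reflect_le (p := U) (N := l)
    omega
  rw [Polynomial.eval_eq_sum_range' hRd, betaP, map_sum]
  refine Finset.sum_congr rfl fun s hs => ?_
  rw [Polynomial.coeff_reflect, Polynomial.revAt_le (by simpa [Nat.lt_succ_iff] using hs), hUc,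
    map_mul, map_pow, mul_comm]

/-! ### Homomorphisms out of the quotient -/

/-- A factorisation `P * Q = X ^ d` over `B`, a ring map `φ : B → A` and roots of `P` in `A`
define a point of `R_{d,ℓ,k} / ⟨β₁, …, β_k⟩` with values in `A`. -/
lemma exists_point {d l k : ℕ} (hld : l ≤ d) {B A : Type} [CommRing B] [CommRing A]
    (ι : F2 →+* B) {P Q : Polynomial B} (hP : P.Monic) (hQ : Q.Monic) (hPd : P.natDegree = l)
    (hQd : Q.natDegree = d - l) (hPQ : P * Q = Polynomial.X ^ d) (φ : B →+* A) (x : Fin k → A)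
    (hx : ∀ i, P.eval₂ φ (x i) = 0) :
    ∃ F : Rdlk d l k ⧸ betaIdeal d l k →+* A, ∀ i,
      F (Ideal.Quotient.mk _ (toR d l k (X (Sum.inl i)))) = x i := by
  set g : MvPolynomial (RVar k l (d - l)) F2 →+* A := eval₂Hom (φ.comp ι)
    (Sum.elim x (Sum.elim (fun s => φ (P.coeff (l - (s + 1))))
      (fun s => φ (Q.coeff (d - l - (s + 1)))))) with hg
  have hgw : ∀ s, g (wP k l (d - l) s) = φ ((Polynomial.reflect l P).coeff s) := by
    intro s
    rw [Polynomial.coeff_reflect, wP]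
    split_ifs with h0 h
    · rw [h0, Polynomial.revAt_le (Nat.zero_le _), Nat.sub_zero, map_one, ← hPd]
      rw [hP.coeff_natDegree, map_one]
    · rw [hg, coe_eval₂Hom, eval₂_X, Polynomial.revAt_le (by omega)]
      simp only [Sum.elim_inr, Sum.elim_inl]
      rw [Nat.sub_add_cancel (by omega)]
    · rw [Polynomial.revAt_eq_self_of_lt (by omega),
        Polynomial.coeff_eq_zero_of_natDegree_lt (by omega), map_zero, map_zero]
  have hgv : ∀ s, g (wBarP k l (d - l) s) = φ ((Polynomial.reflect (d - l) Q).coeff s) := by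
    intro s
    rw [Polynomial.coeff_reflect, wBarP]
    split_ifs with h0 h
    · rw [h0, Polynomial.revAt_le (Nat.zero_le _), Nat.sub_zero, map_one, ← hQd]
      rw [hQ.coeff_natDegree, map_one]
    · rw [hg, coe_eval₂Hom, eval₂_X, Polynomial.revAt_le (by omega)]
      simp only [Sum.elim_inr]
      rw [Nat.sub_add_cancel (by omega)]
    · rw [Polynomial.revAt_eq_self_of_lt (by omega),
        Polynomial.coeff_eq_zero_of_natDegree_lt (by omega), map_zero, map_zero]
  have hgx : ∀ i, g (X (Sum.inl i)) = x i := fun i => by simp [hg]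
  have hI : ∀ p ∈ Irel d l k, g p = 0 := by
    intro p hp
    have hle : Irel d l k ≤ RingHom.ker g := by
      rw [Irel, Ideal.span_le]
      rintro _ ⟨n, hn, rfl⟩
      have hn1 : n ≠ 0 := by have := hn.1; omega
      change g (rhoP k l (d - l) n) = 0
      have hrefl := Polynomial.reflect_mul P Q hPd.le hQd.le
      rw [hPQ, show l + (d - l) = d by omega] at hrefl
      have hc := congrArg (fun p => φ (Polynomial.coeff p n)) hrefl
      simp only [Polynomial.coeff_mul, Finset.Nat.sum_antidiagonal_eq_sum_range_succ_mk,
        map_sum, map_mul, ← hgw, ← hgv] at hc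
      rw [rhoP, map_sum]
      simp only [map_mul]
      rw [← hc, ← one_mul (Polynomial.X ^ d), ← Polynomial.C_1,
        Polynomial.reflect_C_mul_X_pow, Polynomial.revAt_le le_rfl, Nat.sub_self]
      simp [Polynomial.coeff_one, hn1]
    exact hle hp
  set g' : Rdlk d l k →+* A := Ideal.Quotient.lift _ g hI with hg'
  have hg'' : ∀ p, g' (toR d l k p) = g p := fun p => Ideal.Quotient.lift_mk _ _ _
  have hb : ∀ p ∈ betaIdeal d l k, g' p = 0 := by
    intro p hp
    have hle : betaIdeal d l k ≤ RingHom.ker g' := by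
      rw [betaIdeal, Ideal.span_le]
      rintro _ ⟨i, rfl⟩
      change g' (betaP d l k i) = 0
      rw [betaP, hg'', map_sum, ← hx i, Polynomial.eval₂_eq_sum_range, hPd]
      refine Finset.sum_congr rfl fun s hs => ?_
      have hs' : s ≤ l := by simpa [Nat.lt_succ_iff] using hs
      rw [map_mul, map_pow, xP, hgx, hgw, Polynomial.coeff_reflect,
        Polynomial.revAt_le (Nat.sub_le _ _), Nat.sub_sub_self hs', mul_comm]
    exact hle hp
  refine ⟨Ideal.Quotient.lift _ g' hb, fun i => ?_⟩
  rw [Ideal.Quotient.lift_mk, hg'', hgx]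

/-! ### The kernel -/

/-- For `1 ≤ k ≤ ℓ ≤ d-1`, the kernel of the composite
`𝔽₂[x₁,…,x_k] → R_{d,ℓ,k} → R_{d,ℓ,k}/⟨β₁,…,β_k⟩` equals `⟨x₁^d, …, x_k^d⟩`. -/
theorem ker_toR_quotient_beta (d l k : ℕ) (hk : 1 ≤ k) (hkl : k ≤ l) (hld : l ≤ d - 1) :
    RingHom.ker
        (((Ideal.Quotient.mk (betaIdeal d l k)).comp (toR d l k)).comp
          (rename (Sum.inl : Fin k → RVar k l (d - l))).toRingHom) =
      Ideal.span (Set.range fun i : Fin k => (X i : MvPolynomial (Fin k) F2) ^ d) := by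
  have hle : Ideal.span (Set.range fun i : Fin k => (X i : MvPolynomial (Fin k) F2) ^ d) ≤
      RingHom.ker
        (((Ideal.Quotient.mk (betaIdeal d l k)).comp (toR d l k)).comp
          (rename (Sum.inl : Fin k → RVar k l (d - l))).toRingHom) := by
    rw [Ideal.span_le]
    rintro _ ⟨i, rfl⟩
    simp only [SetLike.mem_coe, RingHom.mem_ker, RingHom.comp_apply, AlgHom.toRingHom_eq_coe,
      RingHom.coe_coe, map_pow, rename_X]
    rw [← map_pow, Ideal.Quotient.eq_zero_iff_mem]
    exact Ideal.mem_of_dvd _ (betaP_dvd (by omega) i) (Ideal.subset_span ⟨i, rfl⟩)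
  refine le_antisymm ?_ hle
  by_contra hnot
  have hprod := prod_pow_mem_of_not_le hle hnot
  obtain ⟨B, _, ι, P, Q, hP, hQ, hPd, hQd, hPQ, hne⟩ := exists_factorization_s3 (d - l) l k hkl
  rw [show l + (d - l) = d by omega] at hPQ
  obtain ⟨A, _, φ, x, hx, hc⟩ := exists_roots_s3 hP (by omega : 1 ≤ d) hPQ k
  obtain ⟨F, hF⟩ := exists_point (by omega) ι hP hQ hPd hQd hPQ φ x hx
  simp only [RingHom.mem_ker, RingHom.comp_apply, AlgHom.toRingHom_eq_coe,
    RingHom.coe_coe, map_prod, map_pow, rename_X] at hprod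
  have h0 := congrArg F hprod
  simp only [map_prod, map_pow, hF, map_zero] at h0
  exact hne (by simpa using hc 1 (by rw [h0, mul_zero]))
end
end

section
/- Let d, ℓ, k be integers with 1 ≤ ℓ ≤ d−1 and k ≥ 1, and let 1 ≤ i ≤ k. Then in the ring R_{d,ℓ,k} the identity x_i^d = (∑_{r=0}^{d−ℓ} x_i^r · w̄_{d−ℓ−r}) · β_i holds (with the convention w̄₀ = 1). In particular, x_i^d belongs to the ideal ⟨β₁, …, β_k⟩ of R_{d,ℓ,k}, and hence ⟨x₁^d, …, x_k^d⟩ ⊆ ⟨β₁, …, β_k⟩ in R_{d,ℓ,k}. -/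
/-! Put `W(t) = ∑ w_s t^s` and `W̄(t) = ∑ w̄_s t^s`. In `R_{d,ℓ,k}` the relations say `W W̄ = 1`.
The claim is the homogenized form of this identity: `∑ x^{ℓ-s} w_s` and `∑ x^{d-ℓ-s} w̄_s` are the
homogenizations of `W` and `W̄`, of degrees `ℓ` and `d - ℓ`, so their product is the
homogenization `x^d` of `1` in degree `d`. The lemma `homogenized_mul` is this computation for
finitely supported sequences in a commutative ring; the ideal statements follow at once. -/

noncomputable section

open MvPolynomial Finset

/-- If `∑ a_s t^s` (of degree at most `l`) and `∑ b_s t^s` (of degree at most `m`) have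
product `1`, then their homogenizations in degrees `l` and `m` have product `x ^ (l + m)`. -/
theorem homogenized_mul {A : Type*} [CommRing A] (l m : ℕ) (x : A) (a b : ℕ → A)
    (ha0 : a 0 = 1) (hb0 : b 0 = 1) (ha : ∀ s, l < s → a s = 0) (hb : ∀ s, m < s → b s = 0)
    (hab : ∀ n, 1 ≤ n → n ≤ l + m → ∑ s ∈ range (n + 1), a s * b (n - s) = 0) :
    x ^ (l + m) = (∑ s ∈ range (m + 1), x ^ s * b (m - s)) *
      ∑ s ∈ range (l + 1), x ^ s * a (l - s) := by
  have reflect : ∀ (n : ℕ) (c : ℕ → A), ∑ s ∈ range (n + 1), x ^ s * c (n - s) =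
      ∑ s ∈ range (n + 1), x ^ (n - s) * c s := by
    intro n c
    rw [← sum_range_reflect]
    refine sum_congr rfl fun s hs => ?_
    have : s ≤ n := by simpa [Nat.lt_succ_iff] using hs
    congr 2; omega
  rw [reflect, reflect, mul_comm, sum_mul_sum, ← sum_product']
  -- Collect the terms of the product by total degree `n` in the coefficients.
  rw [← sum_fiberwise_of_maps_to (s := range (l + 1) ×ˢ range (m + 1)) (t := range (l + m + 1))
    (g := fun p => p.1 + p.2)
    (by
      intro p hp
      simp only [mem_product, mem_range] at hp ⊢
      omega)]
  have key : ∀ n ∈ range (l + m + 1),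
      ∑ p ∈ range (l + 1) ×ˢ range (m + 1) with p.1 + p.2 = n,
        x ^ (l - p.1) * a p.1 * (x ^ (m - p.2) * b p.2) =
      x ^ (l + m - n) * ∑ s ∈ range (n + 1), a s * b (n - s) := by
    intro n _
    rw [← Nat.sum_antidiagonal_eq_sum_range_succ (fun s t => a s * b t), mul_sum]
    -- The antidiagonal may leave the rectangle, but there `a` or `b` vanishes.
    trans ∑ p ∈ range (l + 1) ×ˢ range (m + 1) with p.1 + p.2 = n,
        x ^ (l + m - n) * (a p.1 * b p.2)
    · refine sum_congr rfl fun p hp => ?_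
      simp only [mem_filter, mem_product, mem_range] at hp
      rw [show l + m - n = (l - p.1) + (m - p.2) by omega, pow_add]
      ring
    · refine sum_subset (fun p hp => ?_) (fun p hp hp' => ?_)
      · exact HasAntidiagonal.mem_antidiagonal.2 (mem_filter.1 hp).2
      · simp only [HasAntidiagonal.mem_antidiagonal, mem_filter, mem_product, mem_range] at hp hp'
        by_cases h : l < p.1
        · simp [ha _ h]
        · simp [hb p.2 (by omega)]
  rw [sum_congr rfl key, sum_eq_single_of_mem 0 (by simp)]
  · simp [ha0, hb0]
  · intro n hn hn0
    rw [hab n (by omega) (by simpa [Nat.lt_succ_iff] using hn), mul_zero]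

theorem toR_pow_eq (d l k : ℕ) (hld : l ≤ d) (i : Fin k) :
    toR d l k (xP k l (d - l) i ^ d) =
      toR d l k
          (∑ s ∈ Finset.range (d - l + 1),
            xP k l (d - l) i ^ s * wBarP k l (d - l) (d - l - s)) *
        betaP d l k i := by
  have h := homogenized_mul l (d - l) (toR d l k (xP k l (d - l) i))
    (fun s => toR d l k (wP k l (d - l) s)) (fun s => toR d l k (wBarP k l (d - l) s))
    (by simp [wP]) (by simp [wBarP])
    (fun s hs => by
      have h0 : s ≠ 0 := by omega
      have h1 : ¬ s - 1 < l := by omega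
      simp only [wP, h0, h1, if_false, dif_neg, not_false_eq_true, map_zero])
    (fun s hs => by
      have h0 : s ≠ 0 := by omega
      have h1 : ¬ s - 1 < d - l := by omega
      simp only [wBarP, h0, h1, if_false, dif_neg, not_false_eq_true, map_zero])
    (fun n hn hn' => by
      have hmem : rhoP k l (d - l) n ∈ Irel d l k :=
        Ideal.subset_span ⟨n, ⟨hn, by omega⟩, rfl⟩
      have hz : toR d l k (rhoP k l (d - l) n) = 0 := Ideal.Quotient.eq_zero_iff_mem.2 hmem
      simpa only [rhoP, map_sum, map_mul] using hz)
  rw [Nat.add_sub_cancel' hld] at h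
  simpa only [betaP, map_sum, map_mul, map_pow] using h

/-- For `1 ≤ ℓ ≤ d-1`, `k ≥ 1` and `1 ≤ i ≤ k`: in `R_{d,ℓ,k}` one has
`x_i^d = (∑_{r=0}^{d-ℓ} x_i^r ⬝ w̄_{d-ℓ-r}) ⬝ β_i`; in particular
`x_i^d ∈ ⟨β₁, …, β_k⟩` and hence `⟨x₁^d, …, x_k^d⟩ ⊆ ⟨β₁, …, β_k⟩`. -/
theorem xP_pow_d_eq_mul_betaP (d l k : ℕ) (hl : 1 ≤ l) (hld : l ≤ d - 1) (hk : 1 ≤ k)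
    (i : Fin k) :
    (toR d l k (xP k l (d - l) i ^ d) =
      toR d l k
          (∑ s ∈ Finset.range (d - l + 1),
            xP k l (d - l) i ^ s * wBarP k l (d - l) (d - l - s)) *
        betaP d l k i) ∧
    toR d l k (xP k l (d - l) i ^ d) ∈ betaIdeal d l k ∧
    Ideal.span (Set.range fun i' : Fin k => toR d l k (xP k l (d - l) i' ^ d)) ≤
      betaIdeal d l k := by
  have hmem : ∀ j : Fin k, toR d l k (xP k l (d - l) j ^ d) ∈ betaIdeal d l k := fun j => by
    rw [toR_pow_eq d l k (by omega) j]
    exact Ideal.mul_mem_left _ _ (Ideal.subset_span ⟨j, rfl⟩)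
  refine ⟨toR_pow_eq d l k (by omega) i, hmem i, Ideal.span_le.2 ?_⟩
  rintro _ ⟨j, rfl⟩
  exact hmem j
end
end

section
/- Let d, ℓ, k be integers with 1 ≤ ℓ ≤ d−1 and k ≥ 1, and let 1 ≤ i ≤ k. Then there exists an element q ∈ R_{d,ℓ,k} such that in R_{d,ℓ,k} the identity x_i^{d−1} = β_i · q + w̄_{d−ℓ} · (x_i^{ℓ−1} + w₁·x_i^{ℓ−2} + ⋯ + w_{ℓ−2}·x_i + w_{ℓ−1}) holds; that is, the remainder of x_i^{d−1} upon division by β_i is w̄_{d−ℓ} · ∑_{s=0}^{ℓ−1} w_{ℓ−1−s}·x_i^{s} (with the convention w₀ = 1). -/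
/-!
Write `m = d - l`, and let `T` be an indeterminate over `R = R_{d,l,k}`. Reversing the identity
`(∑ w_s T^s) (∑ w̄_s T^s) = 1` turns it into `β(T) β̄(T) = T^d`, where `β(T) = ∑ w_{l-s} T^s` and
`β̄(T) = ∑ w̄_{m-s} T^s` (`reverse_mul_reverse`). Split off the constant terms,
`β = T γ + w_l` and `β̄ = T q + w̄_m`. Since `w_l w̄_m = ρ_d = 0`, this gives
`T^d = T (β q + w̄_m γ)`. The indeterminate `T` can be cancelled in `R[T]`, and evaluating at
`T = x_i` yields the division with quotient `q(x_i)` (`pow_division`). Passing to `R[T]` avoids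
having to show that `x_i` is not a zero divisor in `R`.
-/

noncomputable section

open MvPolynomial Finset

/-- If `(∑ w_s T^s) (∑ w̄_s T^s) = 1`, with factors of degree at most `l` and `m`, then the product
of the two reversed polynomials is `T^(l+m)`. -/
theorem reverse_mul_reverse {A : Type*} [CommRing A] (l m : ℕ) (w v : ℕ → A)
    (hw0 : w 0 = 1) (hv0 : v 0 = 1) (hw : ∀ s, l < s → w s = 0) (hv : ∀ s, m < s → v s = 0)
    (hr : ∀ n, 1 ≤ n → n ≤ l + m → ∑ s ∈ Finset.range (n + 1), w s * v (n - s) = 0) :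
    (∑ s ∈ Finset.range (l + 1), Polynomial.C (w (l - s)) * Polynomial.X ^ s) *
      (∑ s ∈ Finset.range (m + 1), Polynomial.C (v (m - s)) * Polynomial.X ^ s) =
        (Polynomial.X : Polynomial A) ^ (l + m) := by
  have hc : ∀ (N : ℕ) (u : ℕ → A), (∀ s, N < s → u s = 0) → ∀ n,
      (∑ s ∈ Finset.range (N + 1), Polynomial.C (u s) * Polynomial.X ^ s).coeff n = u n := by
    intro N u hu n
    simp only [Polynomial.finsetSum_coeff, Polynomial.coeff_C_mul_X_pow, Finset.sum_ite_eq,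
      Finset.mem_range]
    split_ifs with h
    · rfl
    · exact (hu n (by omega)).symm
  have hrev : ∀ (N : ℕ) (u : ℕ → A), (∀ s, N < s → u s = 0) →
      ∑ s ∈ Finset.range (N + 1), Polynomial.C (u (N - s)) * Polynomial.X ^ s =
        Polynomial.reflect N (∑ s ∈ Finset.range (N + 1), Polynomial.C (u s) * Polynomial.X ^ s) := by
    intro N u hu
    ext n
    rw [Polynomial.coeff_reflect, hc N u hu]
    simp only [Polynomial.finsetSum_coeff, Polynomial.coeff_C_mul_X_pow, Finset.sum_ite_eq,
      Finset.mem_range]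
    split_ifs with h
    · rw [Polynomial.revAt_le (by omega)]
    · rw [Polynomial.revAt_eq_self_of_lt (by omega), hu n (by omega)]
  have hd : ∀ (N : ℕ) (u : ℕ → A),
      (∑ s ∈ Finset.range (N + 1), Polynomial.C (u s) * Polynomial.X ^ s).natDegree ≤ N := by
    intro N u
    refine Polynomial.natDegree_sum_le_of_forall_le _ _ fun s hs => ?_
    exact (Polynomial.natDegree_C_mul_X_pow_le _ _).trans (by simp at hs; omega)
  rw [hrev l w hw, hrev m v hv, ← Polynomial.reflect_mul _ _ (hd l w) (hd m v)]
  have h1 : (∑ s ∈ Finset.range (l + 1), Polynomial.C (w s) * Polynomial.X ^ s) *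
      (∑ s ∈ Finset.range (m + 1), Polynomial.C (v s) * Polynomial.X ^ s) = 1 := by
    ext n
    rw [Polynomial.coeff_mul, Finset.Nat.sum_antidiagonal_eq_sum_range_succ_mk]
    simp only [hc l w hw, hc m v hv, Polynomial.coeff_one]
    split_ifs with h
    · subst h; simp [hw0, hv0]
    · by_cases hn : n ≤ l + m
      · exact hr n (by omega) hn
      · refine Finset.sum_eq_zero fun s _ => ?_
        by_cases hs : l < s
        · rw [hw s hs, zero_mul]
        · rw [hv (n - s) (by omega), mul_zero]
  rw [h1, Polynomial.reflect_one]

/-- Division of `x^(l+m-1)` by `β(x)` in any commutative ring carrying sequences `w`, `v` whose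
generating polynomials are inverse to each other. -/
theorem pow_division {A : Type*} [CommRing A] (l m : ℕ) (hl : 1 ≤ l) (hm : 1 ≤ m) (w v : ℕ → A)
    (hw0 : w 0 = 1) (hv0 : v 0 = 1) (hw : ∀ s, l < s → w s = 0) (hv : ∀ s, m < s → v s = 0)
    (hr : ∀ n, 1 ≤ n → n ≤ l + m → ∑ s ∈ Finset.range (n + 1), w s * v (n - s) = 0) (x : A) :
    ∃ q : A, x ^ (l + m - 1) = (∑ s ∈ Finset.range (l + 1), x ^ s * w (l - s)) * q +
      v m * ∑ s ∈ Finset.range l, w (l - 1 - s) * x ^ s := by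
  have key := reverse_mul_reverse l m w v hw0 hv0 hw hv hr
  -- In `ρ_{l+m}` only the term `s = l` survives.
  have htop : w l * v m = 0 := by
    have h := hr (l + m) (by omega) le_rfl
    rw [Finset.sum_eq_single l] at h
    · simpa using h
    · intro s _ hs
      rcases lt_or_gt_of_ne hs with h' | h'
      · rw [hv _ (by omega), mul_zero]
      · rw [hw _ h', zero_mul]
    · intro h'; simp at h'
  have hsplit : ∀ (N : ℕ) (u : ℕ → A),
      ∑ s ∈ Finset.range (N + 1), Polynomial.C (u (N - s)) * Polynomial.X ^ s =
        Polynomial.X * (∑ s ∈ Finset.range N, Polynomial.C (u (N - 1 - s)) * Polynomial.X ^ s) +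
          Polynomial.C (u N) := by
    intro N u
    rw [Finset.sum_range_succ', Finset.mul_sum]
    congr 1
    · refine Finset.sum_congr rfl fun s _ => ?_
      rw [show N - (s + 1) = N - 1 - s by omega]; ring
    · simp
  have hsl := hsplit l w
  have hsm := hsplit m v
  set B := ∑ s ∈ Finset.range (l + 1), Polynomial.C (w (l - s)) * Polynomial.X ^ s with hB
  set G := ∑ s ∈ Finset.range l, Polynomial.C (w (l - 1 - s)) * Polynomial.X ^ s with hG
  set Q := ∑ s ∈ Finset.range m, Polynomial.C (v (m - 1 - s)) * Polynomial.X ^ s with hQ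
  have htop' : Polynomial.C (w l) * Polynomial.C (v m) = 0 := by
    rw [← Polynomial.C_mul, htop, Polynomial.C_0]
  have hcancel : (Polynomial.X : Polynomial A) ^ (l + m - 1) = B * Q + Polynomial.C (v m) * G := by
    apply Polynomial.isRegular_X.left
    change Polynomial.X * Polynomial.X ^ (l + m - 1) = Polynomial.X * (_ : Polynomial A)
    rw [← pow_succ', show l + m - 1 + 1 = l + m by omega, ← key, hsm]
    linear_combination Polynomial.C (v m) * hsl + htop'
  refine ⟨Q.eval x, ?_⟩
  have h := congrArg (Polynomial.eval x) hcancel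
  simp only [hB, hG, Polynomial.eval_finsetSum, Polynomial.eval_add, Polynomial.eval_mul,
    Polynomial.eval_pow, Polynomial.eval_X, Polynomial.eval_C] at h
  rw [h]
  congr 2
  exact Finset.sum_congr rfl fun s _ => mul_comm _ _

/-- For `1 ≤ ℓ ≤ d-1`, `k ≥ 1` and `1 ≤ i ≤ k`: there is `q ∈ R_{d,ℓ,k}` with
`x_i^{d-1} = β_i ⬝ q + w̄_{d-ℓ} ⬝ (∑_{s=0}^{ℓ-1} w_{ℓ-1-s} ⬝ x_i^s)`. -/
theorem xP_pow_d_sub_one_division (d l k : ℕ) (hl : 1 ≤ l) (hld : l ≤ d - 1) (hk : 1 ≤ k)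
    (i : Fin k) :
    ∃ q : Rdlk d l k,
      toR d l k (xP k l (d - l) i ^ (d - 1)) =
        betaP d l k i * q +
          toR d l k
            (wBarP k l (d - l) (d - l) *
              ∑ s ∈ Finset.range l, wP k l (d - l) (l - 1 - s) * xP k l (d - l) i ^ s) := by
  obtain ⟨q, hq⟩ := pow_division l (d - l) hl (by omega)
    (fun s => toR d l k (wP k l (d - l) s)) (fun s => toR d l k (wBarP k l (d - l) s))
    (by simp [wP]) (by simp [wBarP])
    (fun s hs => by
      simp [wP, show s ≠ 0 by omega, show ¬ s - 1 < l by omega])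
    (fun s hs => by
      simp [wBarP, show s ≠ 0 by omega, show ¬ s - 1 < d - l by omega])
    (fun n h1 h2 => by
      have h : toR d l k (rhoP k l (d - l) n) = 0 :=
        Ideal.Quotient.eq_zero_iff_mem.mpr
          (Ideal.subset_span ⟨n, ⟨h1, by omega⟩, rfl⟩)
      simpa only [rhoP, map_sum, map_mul] using h)
    (toR d l k (xP k l (d - l) i))
  refine ⟨q, ?_⟩
  rw [show l + (d - l) - 1 = d - 1 by omega] at hq
  simpa only [betaP, map_sum, map_mul, map_pow] using hq
end
end

section
/- Let d, ℓ be integers with 1 ≤ ℓ ≤ d−1. Then in the ring R_{d,ℓ,1} the element ∑_{s=0}^{ℓ} x₁^s · w_{ℓ−s} does not divide x₁^{d−1}; equivalently, x₁^{d−1} does not belong to the principal ideal of R_{d,ℓ,1} generated by β₁ = ∑_{s=0}^{ℓ} x₁^s · w_{ℓ−s}. -/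
/-!
Over an algebraically closed field `K` of characteristic two, the polynomial `1 - T ^ d` is a
product of `d` linear factors, one of which is `1 - T`. Grouping the factors gives
`F * G = 1 - T ^ d` with `F`, `G` of degree at most `l`, `d - l`, constant coefficient `1`, and
`F(1) = 0`. Send `x₁ ↦ X`, `w_s ↦ F_s X ^ s` and `w̄_s ↦ G_s X ^ s` in `K[X]`. Then `ρ_n` goes to
`X ^ n` times the `n`-th coefficient of `1 - T ^ d`, which is `0` for `1 ≤ n < d` and a multiple of
`X ^ d` for `n = d`, while `β₁` goes to `F(1) X ^ l = 0`. Hence `β₁ ∣ x₁ ^ (d - 1)` in the quotient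
ring would force `X ^ d ∣ X ^ (d - 1)` in `K[X]`.
-/

noncomputable section

open MvPolynomial Finset

/-- A grouping of the linear factors of `1 - T ^ d` into a factor of degree at most `l` that
vanishes at `1` and a factor of degree at most `d - l`, both with constant coefficient `1`. -/
lemma exists_factorization_one_sub_X_pow (K : Type*) [Field K] [IsAlgClosed K] (d l : ℕ)
    (hl : 1 ≤ l) (hld : l ≤ d) :
    ∃ F G : Polynomial K, F * G = 1 - Polynomial.X ^ d ∧ F.natDegree ≤ l ∧
      G.natDegree ≤ d - l ∧ F.coeff 0 = 1 ∧ G.coeff 0 = 1 ∧ F.eval 1 = 0 := by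
  have hd : d ≠ 0 := by lia
  set p : Polynomial K := Polynomial.X ^ d - 1 with hp
  have hmonic : p.Monic := Polynomial.monic_X_pow_sub_C (1 : K) hd
  have hdeg : p.natDegree = d := Polynomial.natDegree_X_pow_sub_C (r := (1 : K))
  have hsplit : p.Splits := IsAlgClosed.splits p
  have hcard : p.roots.card = d := by rw [← hsplit.natDegree_eq_card_roots, hdeg]
  have hprod : p = (p.roots.map fun r => Polynomial.X - Polynomial.C r).prod :=
    hsplit.eq_prod_roots_of_monic hmonic
  have h1 : (1 : K) ∈ p.roots := by
    rw [Polynomial.mem_roots hmonic.ne_zero]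
    simp [hp]
  obtain ⟨t, ht⟩ := Multiset.exists_cons_of_mem h1
  have htcard : t.card + 1 = d := by rw [← hcard, ht, Multiset.card_cons]
  obtain ⟨S, hSmem⟩ : ∃ S, S ∈ Multiset.powersetCard (l - 1) t := by
    rw [← Multiset.card_pos_iff_exists_mem, Multiset.card_powersetCard]
    exact Nat.choose_pos (by lia)
  obtain ⟨hSt, hS⟩ := Multiset.mem_powersetCard.mp hSmem
  obtain ⟨U, rfl⟩ := Multiset.le_iff_exists_add.mp hSt
  set f : Polynomial K := (((1 : K) ::ₘ S).map fun r => Polynomial.X - Polynomial.C r).prod with hf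
  set g : Polynomial K := (U.map fun r => Polynomial.X - Polynomial.C r).prod with hg
  have hfg : f * g = p := by
    rw [hprod, ht, ← Multiset.cons_add, Multiset.map_add, Multiset.prod_add]
  have hfd : f.natDegree = l := by
    rw [hf, Polynomial.natDegree_multiset_prod_X_sub_C_eq_card, Multiset.card_cons]
    lia
  have hgd : g.natDegree = d - l := by
    rw [hg, Polynomial.natDegree_multiset_prod_X_sub_C_eq_card]
    rw [Multiset.card_add] at htcard
    lia
  have h0 : f.coeff 0 * g.coeff 0 = -1 := by
    rw [← Polynomial.mul_coeff_zero, hfg, hp]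
    simp [Polynomial.coeff_X_pow, hd.symm]
  have hf0 : f.coeff 0 ≠ 0 := by
    intro h
    simp [h] at h0
  -- Rescaling by units of product `-1` turns `f * g = T ^ d - 1` into a factorization of
  -- `1 - T ^ d` whose factors both have constant coefficient `1`.
  refine ⟨Polynomial.C (f.coeff 0)⁻¹ * f, Polynomial.C (-f.coeff 0) * g, ?_, ?_, ?_, ?_, ?_, ?_⟩
  · rw [mul_mul_mul_comm, hfg, ← Polynomial.C_mul, mul_neg, inv_mul_cancel₀ hf0, hp]
    simp
  · exact (Polynomial.natDegree_C_mul_le _ _).trans hfd.le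
  · exact (Polynomial.natDegree_C_mul_le _ _).trans hgd.le
  · rw [Polynomial.coeff_C_mul, inv_mul_cancel₀ hf0]
  · rw [Polynomial.coeff_C_mul, neg_mul, h0, neg_neg]
  · simp [hf]

section Evaluation

variable {K : Type*} [Field K] [Algebra F2 K]

/-- The evaluation `x ↦ X`, `w_s ↦ F_s X ^ s`, `w̄_s ↦ G_s X ^ s` into `K[X]`. The index `i` of a
variable in `RVar` stands for the class of degree `i + 1`. -/
def evalFG (l m : ℕ) (F G : Polynomial K) :
    MvPolynomial (RVar 1 l m) F2 →ₐ[F2] Polynomial K :=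
  aeval (Sum.elim (fun _ => Polynomial.X) (Sum.elim
    (fun i => Polynomial.C (F.coeff (i + 1)) * Polynomial.X ^ ((i : ℕ) + 1))
    (fun i => Polynomial.C (G.coeff (i + 1)) * Polynomial.X ^ ((i : ℕ) + 1))))

variable {l m : ℕ} {F G : Polynomial K}

lemma evalFG_xP : evalFG l m F G (xP 1 l m 0) = Polynomial.X := by
  simp [evalFG, xP]

lemma evalFG_wP (hF : F.natDegree ≤ l) (hF0 : F.coeff 0 = 1) (s : ℕ) :
    evalFG l m F G (wP 1 l m s) = Polynomial.C (F.coeff s) * Polynomial.X ^ s := by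
  rcases s with _ | s
  · simp [wP, hF0]
  · by_cases h : s < l
    · simp [evalFG, wP, h]
    · simp [wP, h, Polynomial.coeff_eq_zero_of_natDegree_lt (show F.natDegree < s + 1 by lia)]

lemma evalFG_wBarP (hG : G.natDegree ≤ m) (hG0 : G.coeff 0 = 1) (s : ℕ) :
    evalFG l m F G (wBarP 1 l m s) = Polynomial.C (G.coeff s) * Polynomial.X ^ s := by
  rcases s with _ | s
  · simp [wBarP, hG0]
  · by_cases h : s < m
    · simp [evalFG, wBarP, h]
    · simp [wBarP, h, Polynomial.coeff_eq_zero_of_natDegree_lt (show G.natDegree < s + 1 by lia)]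

lemma evalFG_rhoP (hF : F.natDegree ≤ l) (hF0 : F.coeff 0 = 1) (hG : G.natDegree ≤ m)
    (hG0 : G.coeff 0 = 1) (n : ℕ) :
    evalFG l m F G (rhoP 1 l m n) = Polynomial.C ((F * G).coeff n) * Polynomial.X ^ n := by
  rw [rhoP, map_sum, Polynomial.coeff_mul, Finset.Nat.sum_antidiagonal_eq_sum_range_succ_mk,
    map_sum, Finset.sum_mul]
  refine Finset.sum_congr rfl fun s hs => ?_
  have hsn : s + (n - s) = n := by
    have := Finset.mem_range.mp hs
    lia
  rw [map_mul, evalFG_wP hF hF0, evalFG_wBarP hG hG0, mul_mul_mul_comm, ← pow_add, hsn,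
    Polynomial.C_mul]

/-- The image of `β` is `F(1) X ^ l`. -/
lemma evalFG_beta (hF : F.natDegree ≤ l) (hF0 : F.coeff 0 = 1) :
    evalFG l m F G (∑ s ∈ Finset.range (l + 1), xP 1 l m 0 ^ s * wP 1 l m (l - s)) =
      Polynomial.C (F.eval 1) * Polynomial.X ^ l := by
  rw [Polynomial.eval_eq_sum_range' (Nat.lt_succ_of_le hF), map_sum, map_sum, Finset.sum_mul,
    ← Finset.sum_range_reflect]
  refine Finset.sum_congr rfl fun s hs => ?_
  have hsl : s ≤ l := Nat.lt_succ_iff.mp (Finset.mem_range.mp hs)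
  rw [map_mul, map_pow, evalFG_xP, evalFG_wP hF hF0, show l + 1 - 1 - s = l - s by lia,
    show l - (l - s) = s by lia, one_pow, mul_one, mul_left_comm, ← pow_add,
    show l - s + s = l by lia]

end Evaluation

/-- For `1 ≤ ℓ ≤ d-1`, in `R_{d,ℓ,1}` the element `β₁ = ∑_{s=0}^{ℓ} x₁^s ⬝ w_{ℓ-s}`
does not divide `x₁^{d-1}`. -/
theorem betaP_not_dvd_xP_pow (d l : ℕ) (hl : 1 ≤ l) (hld : l ≤ d - 1) :
    ¬ betaP d l 1 0 ∣ toR d l 1 (xP 1 l (d - l) 0 ^ (d - 1)) := by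
  rintro ⟨c, hc⟩
  obtain ⟨F, G, hFG, hF, hG, hF0, hG0, hF1⟩ :=
    exists_factorization_one_sub_X_pow (AlgebraicClosure F2) d l hl (by lia)
  obtain ⟨q, rfl⟩ := Ideal.Quotient.mk_surjective c
  have hI : Irel d l 1 ≤ (Ideal.span {(Polynomial.X : Polynomial (AlgebraicClosure F2)) ^ d}).comap
      (evalFG l (d - l) F G) := by
    rw [Irel, Ideal.span_le]
    rintro _ ⟨n, ⟨hn1, hnd⟩, rfl⟩
    rw [SetLike.mem_coe, Ideal.mem_comap, evalFG_rhoP hF hF0 hG hG0, hFG,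
      Ideal.mem_span_singleton]
    rcases hnd.eq_or_lt with rfl | hlt
    · exact dvd_mul_left _ _
    · have h0 : n ≠ 0 := by lia
      simp [Polynomial.coeff_one, Polynomial.coeff_X_pow, h0, hlt.ne]
  have hmem : xP 1 l (d - l) 0 ^ (d - 1) -
      (∑ s ∈ Finset.range (l + 1), xP 1 l (d - l) 0 ^ s * wP 1 l (d - l) (l - s)) * q
        ∈ Irel d l 1 := by
    rw [← Ideal.Quotient.eq, map_mul]
    exact hc
  have hdvd := hI hmem
  rw [Ideal.mem_comap, map_sub, map_mul, evalFG_beta hF hF0, hF1, map_pow, evalFG_xP, map_zero,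
    zero_mul, zero_mul, sub_zero, Ideal.mem_span_singleton,
    pow_dvd_pow_iff Polynomial.X_ne_zero Polynomial.not_isUnit_X] at hdvd
  lia
end
end

section
/- Let a ≥ 1 and k ≥ 1 be integers, let t₁ > t₂ > ⋯ > t_a ≥ 0 be integers, and let i₁, …, i_a be integers with 0 ≤ i_b ≤ k−1 for every 1 ≤ b ≤ a. Then the equality ∑_{b=1}^{a} 2^{i_b + t_b} = 2^{t₁ + k − 1} + 2^{t₂} + 2^{t₃} + ⋯ + 2^{t_a} holds if and only if i₁ = k−1 and i₂ = i₃ = ⋯ = i_a = 0. -/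
/-!
The right-hand side is a sum of `a` distinct powers of two, so it is a binary expansion with exactly
`a` ones, and no sum of fewer than `a` powers of two gives the same value. A sum of `a` powers of two
with that value therefore has no repeated exponent (merging `2 ^ e + 2 ^ e = 2 ^ (e + 1)` would save
a term), and by uniqueness of binary expansions its exponents are exactly those of the right-hand
side; this is `eq_or_card_lt_of_sum_two_pow_eq`. Hence `t₁ + k - 1` is one of the `i_b + t_b`, which
by `t_b < t₁` for `b ≠ 1` forces `b = 1` and `i₁ = k - 1`. The remaining terms satisfy
`2 ^ t_b ≤ 2 ^ (i_b + t_b)` and have equal sums, so they agree termwise.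
-/

noncomputable section

open MvPolynomial Finset

/-- Among all ways of writing a number as a sum of powers of two, the binary expansion is the
unique shortest one. -/
theorem eq_or_card_lt_of_sum_two_pow_eq (S : Finset ℕ) (n : ℕ) :
    ∀ M : Multiset ℕ, M.card = n → (M.map (fun e => 2 ^ e)).sum = ∑ s ∈ S, 2 ^ s →
      M = S.val ∨ S.card < M.card := by
  induction n with
  | zero =>
    intro M hM h
    obtain rfl := Multiset.card_eq_zero.1 hM
    have hS : (∅ : Finset ℕ) = S :=
      Finset.geomSum_injective le_rfl (by simpa using h)
    left
    rw [← hS]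
    rfl
  | succ n ih =>
    intro M hM h
    by_cases hd : M.Nodup
    · left
      have hS : (⟨M, hd⟩ : Finset ℕ) = S := Finset.geomSum_injective le_rfl h
      rw [← hS]
    · right
      rw [Multiset.nodup_iff_le] at hd
      push Not at hd
      obtain ⟨e, he⟩ := hd
      obtain ⟨M', rfl⟩ := Multiset.le_iff_exists_add.1 he
      have hc : ((e + 1) ::ₘ M').card = n := by simp at hM ⊢; omega
      -- Replace the two copies of `e` by a single `e + 1`.
      have key := ih ((e + 1) ::ₘ M') hc (by
        rw [← h]
        simp [pow_succ]
        ring)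
      rcases key with key | key
      · rw [Finset.card_def, ← key]
        omega
      · omega

/-- For `a ≥ 1`, `k ≥ 1`, strictly decreasing exponents `t₁ > ⋯ > t_a ≥ 0`, and
`0 ≤ i_b ≤ k-1`: `∑_b 2^{i_b + t_b} = 2^{t₁+k-1} + 2^{t₂} + ⋯ + 2^{t_a}` holds iff
`i₁ = k-1` and `i₂ = ⋯ = i_a = 0`. -/
theorem sum_two_pow_eq_iff (a k : ℕ) (ha : 1 ≤ a) (hk : 1 ≤ k)
    (t : Fin a → ℕ) (ht : StrictAnti t) (i : Fin a → ℕ) (hi : ∀ b, i b ≤ k - 1) :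
    (∑ b, 2 ^ (i b + t b)) =
        2 ^ (t ⟨0, ha⟩ + (k - 1)) + ∑ b ∈ Finset.univ.erase ⟨0, ha⟩, 2 ^ t b ↔
      i ⟨0, ha⟩ = k - 1 ∧ ∀ b, b ≠ ⟨0, ha⟩ → i b = 0 := by
  have hlt : ∀ b, b ≠ ⟨0, ha⟩ → t b < t ⟨0, ha⟩ := fun b hb =>
    ht (lt_of_le_of_ne (Fin.mk_le_of_le_val (Nat.zero_le _)) hb.symm)
  have hsplit := (Finset.add_sum_erase Finset.univ (fun b => 2 ^ (i b + t b))
    (Finset.mem_univ (⟨0, ha⟩ : Fin a)))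
  constructor
  · intro h
    have hnot : t ⟨0, ha⟩ + (k - 1) ∉ ((Finset.univ : Finset (Fin a)).erase ⟨0, ha⟩).image t := by
      intro hm
      obtain ⟨b, hb, hbt⟩ := Finset.mem_image.1 hm
      have := hlt b (Finset.ne_of_mem_erase hb)
      omega
    have key := eq_or_card_lt_of_sum_two_pow_eq
      (insert (t ⟨0, ha⟩ + (k - 1)) (((Finset.univ : Finset (Fin a)).erase ⟨0, ha⟩).image t)) _
      ((Finset.univ : Finset (Fin a)).val.map (fun b => i b + t b)) rfl (by
        rw [Finset.sum_insert hnot, Finset.sum_image ht.injective.injOn, ← h, Multiset.map_map]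
        rfl)
    have hcard : (insert (t ⟨0, ha⟩ + (k - 1))
        (((Finset.univ : Finset (Fin a)).erase ⟨0, ha⟩).image t)).card = a := by
      rw [Finset.card_insert_of_notMem hnot, Finset.card_image_of_injective _ ht.injective,
        Finset.card_erase_of_mem (Finset.mem_univ _), Finset.card_univ, Fintype.card_fin]
      omega
    have hM : ((Finset.univ : Finset (Fin a)).val.map (fun b => i b + t b)).card = a := by
      simp
    have hMS := key.resolve_right (by omega)
    have hmem : t ⟨0, ha⟩ + (k - 1) ∈
        (Finset.univ : Finset (Fin a)).val.map (fun b => i b + t b) := by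
      rw [hMS, Finset.mem_val]
      exact Finset.mem_insert_self _ _
    obtain ⟨b, -, hb⟩ := Multiset.mem_map.1 hmem
    have hb0 : b = ⟨0, ha⟩ := by
      by_contra hne
      have := hlt b hne
      have := hi b
      omega
    subst hb0
    have hi0 : i ⟨0, ha⟩ = k - 1 := by omega
    refine ⟨hi0, fun b hb => ?_⟩
    have hsum : ∑ b ∈ Finset.univ.erase ⟨0, ha⟩, 2 ^ t b =
        ∑ b ∈ Finset.univ.erase ⟨0, ha⟩, 2 ^ (i b + t b) := by
      rw [← hsplit] at h
      simp only [hi0, add_comm (k - 1)] at h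
      exact (Nat.add_left_cancel h).symm
    have hterm := (Finset.sum_eq_sum_iff_of_le (fun b _ =>
      Nat.pow_le_pow_right two_pos (Nat.le_add_left (t b) (i b)))).1 hsum b
      (Finset.mem_erase.2 ⟨hb, Finset.mem_univ _⟩)
    have := Nat.pow_right_injective le_rfl hterm
    omega
  · rintro ⟨h0, h1⟩
    rw [← hsplit, h0, add_comm (k - 1)]
    congr 1
    refine Finset.sum_congr rfl fun b hb => ?_
    rw [h1 b (Finset.ne_of_mem_erase hb), zero_add]
end
end
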